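/- Let I ⊆ R = k[x_1,...,x_n] be a squarefree monomial ideal and r ≥ 0. For every α ∈ {-1,0}^n, the multiplicity m_{r,α} of the characteristic-cycle-type decomposition of H^r_I(R) equals dim_k of the degree-α component of H^r_I(R); i.e., the graded piece H^r_I(R)_α is a finite-dimensional k-vector space whose dimension equals the Betti-type invariant m_{r,α} = dim_k H̃_{|α|-r-1}(K(>p_α); k) of the intersection poset, where p_α corresponds to α (and m_{r,α} = 0 if p_α is not in the poset). -/

import Mathlib

open MvPolynomial

/-- `a ∈ Ω = {-1,0}^n`. -/
def isOm {n : ℕ} (a : Fin n → ℤ) : Prop := ∀ i, a i = 0 ∨ a i = -1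

/-- The face prime ideal `p_a = (xᵢ : a i = -1)`. -/
noncomputable def faceIdeal {n : ℕ} (k : Type*) [CommSemiring k] (a : Fin n → ℤ) :
    Ideal (MvPolynomial (Fin n) k) :=
  Ideal.span (MvPolynomial.X '' {i | a i = -1})

/-- `|a|`, the number of `-1` entries of `a ∈ Ω`. -/
def wt {n : ℕ} (a : Fin n → ℤ) : ℕ := (Finset.univ.filter fun i => a i = -1).card

/-- The local cohomology module `H^r_I(R)` for `R = k[x₁,…,xₙ]`, as a type. -/
abbrev LC {n : ℕ} (k : Type) [Field k] (I : Ideal (MvPolynomial (Fin n) k)) (r : ℕ) : Type :=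
  ((localCohomology I r).obj
    (ModuleCat.of (MvPolynomial (Fin n) k) (MvPolynomial (Fin n) k)))

/-- A family of `k`-subspaces indexed by `ℤⁿ` is a compatible `ℤⁿ`-grading of an
`R = k[x₁,…,xₙ]`-module when multiplication by `xᵢ` raises degrees by `eᵢ`. -/
def GradingCompat {n : ℕ} (k : Type) [Field k] (M : Type*) [AddCommGroup M]
    [Module (MvPolynomial (Fin n) k) M] [Module k M]
    (g : (Fin n → ℤ) → Submodule k M) : Prop :=
  ∀ (i : Fin n) (d : Fin n → ℤ), ∀ m ∈ g d,
    (MvPolynomial.X i : MvPolynomial (Fin n) k) • m ∈ g (d + Pi.single i 1)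

/-- Chains of `m` elements of a preorder `P`: strictly increasing `m`-tuples. These are the
`(m-1)`-simplices of the order complex `K(P)`; for `m = 0` there is exactly one (empty) chain. -/
def pchains (P : Type*) [Preorder P] (m : ℕ) : Type _ :=
  {f : Fin m → P // StrictMono f}

/-- The boundary map of the augmented simplicial chain complex of the order complex of `P`
with coefficients in `M`: the alternating sum over deletions of a vertex.  In degree `0`
this is the augmentation onto `pchains P 0 →₀ M ≃ M`. -/
noncomputable def simpBdry (A : Type*) [CommRing A] (M : Type*) [AddCommGroup M] [Module A M]
    (P : Type*) [Preorder P] (m : ℕ) :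
    (pchains P (m + 1) →₀ M) →ₗ[A] (pchains P m →₀ M) :=
  Finsupp.lsum ℕ fun c =>
    ∑ i : Fin (m + 1), ((-1 : A) ^ (i : ℕ)) •
      (Finsupp.lsingle (⟨c.1 ∘ i.succAbove, c.2.comp (Fin.strictMono_succAbove i)⟩ : pchains P m))

/-- Cycles of the augmented simplicial chain complex (everything in lowest degree). -/
noncomputable def simpCycles (A : Type*) [CommRing A] (M : Type*) [AddCommGroup M] [Module A M]
    (P : Type*) [Preorder P] : (m : ℕ) → Submodule A (pchains P m →₀ M)
  | 0 => ⊤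
  | (m + 1) => LinearMap.ker (simpBdry A M P m)

/-- `simpHomology A M P m` is the reduced simplicial homology `H̃_{m-1}(K(P); M)` of the order
complex of `P` with coefficients in the `A`-module `M`, computed from the augmented chain
complex; with this convention `H̃_{-1}(∅; M) = M` (the case `m = 0`, `P = ∅`). -/
@[reducible] noncomputable def simpHomology (A : Type*) [CommRing A] (M : Type*) [AddCommGroup M] [Module A M]
    (P : Type*) [Preorder P] (m : ℕ) : Type _ :=
  ↥(simpCycles A M P m) ⧸
    (Submodule.comap (simpCycles A M P m).subtype (LinearMap.range (simpBdry A M P m)))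

/-- Membership in the intersection poset of the coordinate-subspace arrangement defined by a
monomial ideal `I`: the (proper) sums of nonempty collections of minimal primes of `I`. -/
@[reducible] def arrMem {n : ℕ} (k : Type) [Field k] (I : Ideal (MvPolynomial (Fin n) k))
    (J : Ideal (MvPolynomial (Fin n) k)) : Prop :=
  J ≠ ⊤ ∧ ∃ T : Finset (Ideal (MvPolynomial (Fin n) k)),
    ↑T ⊆ I.minimalPrimes ∧ T.Nonempty ∧ J = T.sup id

/-- The intersection poset `P(X)` of the arrangement defined by `I`, ordered by inclusion of
the subspaces, i.e. by reverse inclusion of the defining ideals. -/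
@[reducible] def arrP {n : ℕ} (k : Type) [Field k] (I : Ideal (MvPolynomial (Fin n) k)) :
    Type :=
  {J : (Ideal (MvPolynomial (Fin n) k))ᵒᵈ // arrMem k I (OrderDual.ofDual J)}

section PartC1
open CategoryTheory Limits Opposite

variable {A : Type} [CommRing A]

/-- class map from cocycles to homology -/
noncomputable def hcl {ι : Type} {c : ComplexShape ι} (K : HomologicalComplex (ModuleCat.{0} A) c)
    (i j : ι) (hj : c.next i = j) : LinearMap.ker (K.d i j).hom →ₗ[A] K.homology i :=
  (K.liftCycles (A := ModuleCat.of A (LinearMap.ker (K.d i j).hom))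
    (ModuleCat.ofHom (LinearMap.ker (K.d i j).hom).subtype) j hj
    (by ext x; exact x.2) ≫ K.homologyπ i).hom

lemma hcl_i {ι : Type} {c : ComplexShape ι} (K : HomologicalComplex (ModuleCat.{0} A) c)
    (i j : ι) (hj : c.next i = j) (x : LinearMap.ker (K.d i j).hom) :
    K.iCycles i ((K.liftCycles (A := ModuleCat.of A (LinearMap.ker (K.d i j).hom))
    (ModuleCat.ofHom (LinearMap.ker (K.d i j).hom).subtype) j hj
    (by ext x; exact x.2)) x) = x.1 := by
  rw [← ConcreteCategory.comp_apply]
  erw [K.liftCycles_i]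
  rfl

lemma hcl_surj {ι : Type} {c : ComplexShape ι} (K : HomologicalComplex (ModuleCat.{0} A) c)
    (i j : ι) (hj : c.next i = j) : Function.Surjective (hcl K i j hj) := by
  intro y
  obtain ⟨z, rfl⟩ := (ModuleCat.epi_iff_surjective (K.homologyπ i)).1 inferInstance y
  refine ⟨⟨K.iCycles i z, ?_⟩, ?_⟩
  · have := K.iCycles_d i j
    have h2 := congrArg (fun f => f.hom z) this
    exact h2
  · simp only [hcl, ModuleCat.hom_comp, LinearMap.comp_apply]
    congr 1
    apply (ModuleCat.mono_iff_injective (K.iCycles i)).1 inferInstance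
    rw [← ConcreteCategory.comp_apply]
    erw [K.liftCycles_i]
    rfl

lemma hcl_eq_zero {ι : Type} {c : ComplexShape ι} (K : HomologicalComplex (ModuleCat.{0} A) c)
    (h i j : ι) (hh : c.prev i = h) (hj : c.next i = j) (x : LinearMap.ker (K.d i j).hom) :
    hcl K i j hj x = 0 ↔ ∃ w : K.X h, K.d h i w = x.1 := by
  set z := (K.liftCycles (A := ModuleCat.of A (LinearMap.ker (K.d i j).hom))
    (ModuleCat.ofHom (LinearMap.ker (K.d i j).hom).subtype) j hj
    (by ext x; exact x.2)) x with hz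
  have hzi : K.iCycles i z = x.1 := by
    rw [hz, ← ConcreteCategory.comp_apply]
    erw [K.liftCycles_i]
    rfl
  have hcl' : hcl K i j hj x = K.homologyπ i z := rfl
  rw [hcl']
  have hex : (ShortComplex.mk _ _ (K.toCycles_comp_homologyπ h i)).Exact :=
    ShortComplex.exact_of_g_is_cokernel _ (K.homologyIsCokernel h i hh)
  rw [ShortComplex.moduleCat_exact_iff] at hex
  constructor
  · intro h0
    obtain ⟨w, hw⟩ := hex z h0
    refine ⟨w, ?_⟩
    rw [← hzi]
    change (K.toCycles h i) w = z at hw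
    rw [← hw, ← ConcreteCategory.comp_apply, K.toCycles_i]
  · rintro ⟨w, hw⟩
    have : z = K.toCycles h i w := by
      apply (ModuleCat.mono_iff_injective (K.iCycles i)).1 inferInstance
      rw [hzi, ← ConcreteCategory.comp_apply, K.toCycles_i, hw]
    rw [this, ← ConcreteCategory.comp_apply, K.toCycles_comp_homologyπ]
    rfl

lemma hcl_nat {ι : Type} {c : ComplexShape ι} {K L : HomologicalComplex (ModuleCat.{0} A) c}
    (φ : K ⟶ L) (i j : ι) (hj : c.next i = j) (x : LinearMap.ker (K.d i j).hom)
    (y : LinearMap.ker (L.d i j).hom) (hxy : φ.f i x.1 = y.1) :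
    HomologicalComplex.homologyMap φ i (hcl K i j hj x) = hcl L i j hj y := by
  have hx := hcl_i K i j hj x
  have hy := hcl_i L i j hj y
  have e1 : ∀ z, HomologicalComplex.homologyMap φ i (K.homologyπ i z) =
      L.homologyπ i (HomologicalComplex.cyclesMap φ i z) := fun z => by
    rw [← ConcreteCategory.comp_apply, HomologicalComplex.homologyπ_naturality,
      ConcreteCategory.comp_apply]
  have e2 : ∀ z, L.iCycles i (HomologicalComplex.cyclesMap φ i z) = φ.f i (K.iCycles i z) :=
    fun z => by
      rw [← ConcreteCategory.comp_apply, HomologicalComplex.cyclesMap_i,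
        ConcreteCategory.comp_apply]
  refine (e1 _).trans (congrArg (L.homologyπ i) ?_)
  apply (ModuleCat.mono_iff_injective (L.iCycles i)).1 inferInstance
  exact (e2 _).trans ((congrArg (φ.f i) hx).trans (hxy.trans hy.symm))

variable {X X' : ModuleCat.{0} A}

/-- cocycles for Ext -/
def extZ (P : ProjectiveResolution X) (Y : ModuleCat.{0} A) (r : ℕ) :
    Submodule A (P.complex.X r ⟶ Y) where
  carrier := {ψ | P.complex.d (r+1) r ≫ ψ = 0}
  zero_mem' := by simp
  add_mem' := by
    intro a b ha hb
    simp only [Set.mem_ofPred_eq] at *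
    simp [ha, hb]
  smul_mem' := by
    intro a b hb
    simp only [Set.mem_ofPred_eq] at *
    simp [hb]

lemma extKey (P : ProjectiveResolution X) (Y : ModuleCat.{0} A) (r : ℕ) (ψ : P.complex.X r ⟶ Y) :
    ψ ∈ extZ P Y r ↔ ψ ∈ LinearMap.ker ((P.complex.linearYonedaObj A Y).d r (r+1)).hom := by
  rfl

noncomputable def ecl (P : ProjectiveResolution X) (Y : ModuleCat.{0} A) (r : ℕ) :
    extZ P Y r →ₗ[A] ((Ext A (ModuleCat.{0} A) r).obj (op X)).obj Y :=
  (P.isoExt r Y).inv.hom ∘ₗ hcl (P.complex.linearYonedaObj A Y) r (r+1) (by simp)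

lemma ecl_surj (P : ProjectiveResolution X) (Y : ModuleCat.{0} A) (r : ℕ) :
    Function.Surjective (ecl P Y r) := by
  have h1 : Function.Surjective (P.isoExt (R := A) r Y).inv :=
    (ModuleCat.epi_iff_surjective _).1 inferInstance
  exact h1.comp (hcl_surj _ _ _ _)

lemma ecl_inj (P : ProjectiveResolution X) (Y : ModuleCat.{0} A) (r : ℕ) :
    Function.Injective (P.isoExt (R := A) r Y).inv :=
    (ModuleCat.mono_iff_injective _).1 inferInstance

lemma ecl_zero_aux (P : ProjectiveResolution X) (Y : ModuleCat.{0} A) (r : ℕ) (x : extZ P Y r) :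
    ecl P Y r x = 0 ↔ hcl (P.complex.linearYonedaObj A Y) r (r+1) (by simp) x = 0 := by
  have h := ecl_inj P Y r
  constructor
  · intro h0
    exact h (h0.trans (map_zero (P.isoExt (R := A) r Y).inv.hom).symm)
  · intro h0
    exact (congrArg (P.isoExt (R := A) r Y).inv h0).trans (map_zero (P.isoExt (R := A) r Y).inv.hom)

lemma ecl_zero_succ (P : ProjectiveResolution X) (Y : ModuleCat.{0} A) (r : ℕ)
    (x : extZ P Y (r+1)) :
    ecl P Y (r+1) x = 0 ↔ ∃ w : P.complex.X r ⟶ Y, P.complex.d (r+1) r ≫ w = x.1 := by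
  rw [ecl_zero_aux]
  exact hcl_eq_zero (P.complex.linearYonedaObj A Y) r (r+1) (r+2) (by simp) (by simp) x

lemma ecl_zero_zero (P : ProjectiveResolution X) (Y : ModuleCat.{0} A) (x : extZ P Y 0) :
    ecl P Y 0 x = 0 ↔ x = 0 := by
  rw [ecl_zero_aux]
  refine (hcl_eq_zero (P.complex.linearYonedaObj A Y) 0 0 1 (by simp) (by simp) x).trans ?_
  have : (P.complex.linearYonedaObj A Y).d 0 0 = 0 :=
    (P.complex.linearYonedaObj A Y).shape _ _ (by simp)
  rw [this]
  constructor
  · rintro ⟨w, hw⟩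
    exact Subtype.ext hw.symm
  · rintro rfl
    exact ⟨0, rfl⟩

/-- the induced map on Hom complexes -/
noncomputable def yonMap {K L : ChainComplex (ModuleCat.{0} A) ℕ} (φ : K ⟶ L) (Y : ModuleCat.{0} A) :
    L.linearYonedaObj A Y ⟶ K.linearYonedaObj A Y :=
  (HomologicalComplex.unopFunctor _ _).map
    ((((linearYoneda A (ModuleCat.{0} A)).obj Y).rightOp.mapHomologicalComplex _).map φ).op

lemma isoExt_nat (f : X ⟶ X') (P : ProjectiveResolution X) (Q : ProjectiveResolution X')
    (φ : P.complex ⟶ Q.complex) (comm : φ.f 0 ≫ Q.π.f 0 = P.π.f 0 ≫ f)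
    (Y : ModuleCat.{0} A) (r : ℕ) :
    (Q.isoExt (R := A) r Y).inv ≫ ((Ext A (ModuleCat.{0} A) r).map f.op).app Y =
      HomologicalComplex.homologyMap (yonMap φ Y) r ≫ (P.isoExt (R := A) r Y).inv := by
  have h1 := ProjectiveResolution.isoLeftDerivedObj_hom_naturality f P Q φ comm
    ((linearYoneda A (ModuleCat.{0} A)).obj Y).rightOp r
  have h2 := congrArg Quiver.Hom.unop h1
  have h3 := HomologicalComplex.homologyOp_hom_naturality (i := r) (yonMap φ Y)
  have h4 := congrArg Quiver.Hom.unop h3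
  change (Q.isoLeftDerivedObj ((linearYoneda A (ModuleCat.{0} A)).obj Y).rightOp r).hom.unop ≫
      ((Ext A (ModuleCat.{0} A) r).map f.op).app Y = (HomologicalComplex.homologyMap
        ((((linearYoneda A (ModuleCat.{0} A)).obj Y).rightOp.mapHomologicalComplex _).map φ)
        r).unop ≫
      (P.isoLeftDerivedObj ((linearYoneda A (ModuleCat.{0} A)).obj Y).rightOp r).hom.unop at h2
  change ((Q.complex.linearYonedaObj A Y).homologyOp r).hom.unop ≫ (HomologicalComplex.homologyMap
        ((((linearYoneda A (ModuleCat.{0} A)).obj Y).rightOp.mapHomologicalComplex _).map φ)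
        r).unop = HomologicalComplex.homologyMap (yonMap φ Y) r ≫
      ((P.complex.linearYonedaObj A Y).homologyOp r).hom.unop at h4
  change (((Q.complex.linearYonedaObj A Y).homologyOp r).hom.unop ≫
      (Q.isoLeftDerivedObj ((linearYoneda A (ModuleCat.{0} A)).obj Y).rightOp r).hom.unop) ≫
      ((Ext A (ModuleCat.{0} A) r).map f.op).app Y =
    HomologicalComplex.homologyMap (yonMap φ Y) r ≫
      ((P.complex.linearYonedaObj A Y).homologyOp r).hom.unop ≫
      (P.isoLeftDerivedObj ((linearYoneda A (ModuleCat.{0} A)).obj Y).rightOp r).hom.unop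
  refine (Category.assoc _ _ _).trans ?_
  refine (congrArg _ h2).trans ?_
  refine (Category.assoc _ _ _).symm.trans ?_
  refine (congrArg (· ≫ _) h4).trans ?_
  exact Category.assoc _ _ _

lemma ecl_nat (f : X ⟶ X') (P : ProjectiveResolution X) (Q : ProjectiveResolution X')
    (φ : P.complex ⟶ Q.complex) (comm : φ.f 0 ≫ Q.π.f 0 = P.π.f 0 ≫ f)
    (Y : ModuleCat.{0} A) (r : ℕ) (x : extZ Q Y r) (y : extZ P Y r)
    (hxy : φ.f r ≫ x.1 = y.1) :
    ((Ext A (ModuleCat.{0} A) r).map f.op).app Y (ecl Q Y r x) = ecl P Y r y := by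
  have h := isoExt_nat f P Q φ comm Y r
  have h1 := congrArg (fun g => g.hom (hcl (Q.complex.linearYonedaObj A Y) r (r+1) (by simp) x)) h
  refine h1.trans ?_
  exact congrArg (P.isoExt (R := A) r Y).inv (hcl_nat (yonMap φ Y) r (r+1) (by simp) x y hxy)
end PartC1

section PartC2
open CategoryTheory Limits Opposite localCohomology

variable {A : Type} [CommRing A]

/-- the quotient map between quotients by ideals -/
noncomputable def qmap {J J' : Ideal A} (h : J' ≤ J) :
    ModuleCat.of A (A ⧸ J') ⟶ ModuleCat.of A (A ⧸ J) :=
  ModuleCat.ofHom (Submodule.mapQ J' J LinearMap.id h)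

/-- a decreasing sequence of ideals as a diagram -/
def seqDiag (J : ℕ → Ideal A) (hJ : Antitone J) : ℕᵒᵖ ⥤ Ideal A where
  obj t := J (unop t)
  map w := ⟨⟨hJ w.unop.down.down⟩⟩

def seqLift (I : Ideal A) (J : ℕ → Ideal A) (hJ : Antitone J) (hr : ∀ t, I ≤ (J t).radical) :
    ℕᵒᵖ ⥤ SelfLERadical I :=
  ObjectProperty.lift _ (seqDiag J hJ) fun k => hr _

lemma seq_initial [hR : IsNoetherianRing A] (I : Ideal A) (J : ℕ → Ideal A) (hJ : Antitone J)
    (hr : ∀ t, I ≤ (J t).radical) (hc : ∀ N, ∃ t, J t ≤ I ^ N) :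
    Functor.Initial (seqLift I J hJ hr) where
  out J' := by
    apply +allowSynthFailures zigzag_isConnected
    · obtain ⟨k, hk⟩ := Ideal.exists_pow_le_of_le_radical_of_fg J'.2 (isNoetherian_def.mp hR _)
      obtain ⟨t, ht⟩ := hc k
      exact ⟨CostructuredArrow.mk (⟨⟨⟨ht.trans hk⟩⟩⟩ : (seqLift I J hJ hr).obj (op t) ⟶ J')⟩
    · intro j1 j2
      apply Relation.ReflTransGen.single
      rcases le_total (unop j1.left) (unop j2.left) with h | h
      · right; exact ⟨CostructuredArrow.homMk (homOfLE h).op rfl⟩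
      · left; exact ⟨CostructuredArrow.homMk (homOfLE h).op rfl⟩

noncomputable def seqIso [hR : IsNoetherianRing A] (I : Ideal A) (J : ℕ → Ideal A) (hJ : Antitone J)
    (hr : ∀ t, I ≤ (J t).radical) (hc : ∀ N, ∃ t, J t ≤ I ^ N) (i : ℕ) :
    ofDiagram.{0, 0} (seqDiag J hJ) i ≅ localCohomology I i :=
  haveI := seq_initial I J hJ hr hc
  (localCohomology.isoOfFinal.{0, 0, 0} (seqLift I J hJ hr) (selfLERadicalDiagram I) i) ≪≫
    isoSelfLERadical I i

lemma lc_colim [hR : IsNoetherianRing A] (I : Ideal A) (J : ℕ → Ideal A) (hJ : Antitone J)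
    (hr : ∀ t, I ≤ (J t).radical) (hc : ∀ N, ∃ t, J t ≤ I ^ N) (r : ℕ) (Y : ModuleCat.{0} A) :
    ∃ lam : ∀ t, ((Ext A (ModuleCat.{0} A) r).obj (op (ModuleCat.of A (A ⧸ J t)))).obj Y →ₗ[A]
        (localCohomology I r).obj Y,
      (∀ y, ∃ t x, lam t x = y) ∧
      (∀ t t' (h : t ≤ t') x,
        lam t' (((Ext A (ModuleCat.{0} A) r).map (qmap (hJ h)).op).app Y x) = lam t x) ∧
      (∀ t x, lam t x = 0 → ∃ t' , ∃ h : t ≤ t',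
        ((Ext A (ModuleCat.{0} A) r).map (qmap (hJ h)).op).app Y x = 0) := by
  haveI := hasColimitDiagram.{0, 0} (seqDiag J hJ) r
  let e := (seqIso I J hJ hr hc r).app Y
  let D := diagram (seqDiag J hJ) r
  let c := ((evaluation _ _).obj Y).mapCocone (colimit.cocone D)
  have hcol : IsColimit c := isColimitOfPreserves ((evaluation _ _).obj Y) (colimit.isColimit D)
  have einj : Function.Injective e.hom := (ModuleCat.mono_iff_injective _).1 inferInstance
  have esurj : Function.Surjective e.hom := (ModuleCat.epi_iff_surjective _).1 inferInstance
  refine ⟨fun t => e.hom.hom ∘ₗ (c.ι.app (op (op t))).hom, ?_, ?_, ?_⟩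
  · intro y
    obtain ⟨y, rfl⟩ := esurj y
    obtain ⟨j, x, hx⟩ := Concrete.isColimit_exists_rep _ hcol y
    exact ⟨j.unop.unop, x, congrArg e.hom hx⟩
  · intro t t' h x
    have := c.w (homOfLE h).op.op
    exact congrArg (fun f => e.hom (f.hom x)) this
  · intro t x hx
    have h0 : c.ι.app (op (op t)) x = 0 := einj (hx.trans (map_zero e.hom.hom).symm)
    have h1 : c.ι.app (op (op t)) x = c.ι.app (op (op t)) 0 := h0.trans (map_zero _).symm
    obtain ⟨j, f, g, hj⟩ := Concrete.isColimit_exists_of_rep_eq _ hcol _ _ h1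
    refine ⟨j.unop.unop, f.unop.unop.down.down, ?_⟩
    refine hj.trans ?_
    exact map_zero _
end PartC2

section PartC3
open CategoryTheory Limits Opposite localCohomology

variable {A : Type} [CommRing A]
variable (M : ℕ → Type) [∀ r, AddCommGroup (M r)] [∀ r, Module A (M r)]

/-- chain complex from modules -/
noncomputable def mkCx (d : ∀ r, M (r+1) →ₗ[A] M r) (hd : ∀ r x, d r (d (r+1) x) = 0) :
    ChainComplex (ModuleCat.{0} A) ℕ :=
  ChainComplex.of (fun r => ModuleCat.of A (M r)) (fun r => ModuleCat.ofHom (d r))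
    (fun r => by ext x; exact hd r x)

lemma mkCx_d (d : ∀ r, M (r+1) →ₗ[A] M r) (hd : ∀ r x, d r (d (r+1) x) = 0) (r : ℕ) :
    (mkCx M d hd).d (r+1) r = ModuleCat.ofHom (d r) :=
  ChainComplex.of_d (fun r => ModuleCat.of A (M r)) (fun r => ModuleCat.ofHom (d r)) r

/-- augmentation -/
noncomputable def mkPi (d : ∀ r, M (r+1) →ₗ[A] M r) (hd : ∀ r x, d r (d (r+1) x) = 0)
    (Q : Type) [AddCommGroup Q] [Module A Q]
    (p : M 0 →ₗ[A] Q) (h0 : ∀ x, p x = 0 ↔ ∃ y, d 0 y = x) :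
    mkCx M d hd ⟶ (ChainComplex.single₀ _).obj (ModuleCat.of A Q) :=
  (ChainComplex.toSingle₀Equiv (mkCx M d hd) (ModuleCat.of A Q)).symm
    ⟨ModuleCat.ofHom p, by
      rw [mkCx_d]
      ext x
      exact (h0 _).2 ⟨x, rfl⟩⟩

lemma mkPi_zero (d : ∀ r, M (r+1) →ₗ[A] M r) (hd : ∀ r x, d r (d (r+1) x) = 0)
    (Q : Type) [AddCommGroup Q] [Module A Q]
    (p : M 0 →ₗ[A] Q) (h0 : ∀ x, p x = 0 ↔ ∃ y, d 0 y = x) :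
    (mkPi M d hd Q p h0).f 0 = ModuleCat.ofHom p :=
  ChainComplex.toSingle₀Equiv_symm_apply_f_zero _ _

lemma mkPi_qi (d : ∀ r, M (r+1) →ₗ[A] M r) (hd : ∀ r x, d r (d (r+1) x) = 0)
    (Q : Type) [AddCommGroup Q] [Module A Q]
    (p : M 0 →ₗ[A] Q) (h0 : ∀ x, p x = 0 ↔ ∃ y, d 0 y = x) (hp : Function.Surjective p) 
    (hex : ∀ r x, d r x = 0 → ∃ y, d (r+1) y = x) :
    QuasiIso (mkPi M d hd Q p h0) where
  quasiIsoAt m := by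
    cases m with
    | zero =>
      rw [ChainComplex.quasiIsoAt₀_iff, ShortComplex.quasiIso_iff_of_zeros' _ rfl rfl rfl]
      constructor
      · rw [ShortComplex.moduleCat_exact_iff]
        intro x hx
        change ((mkPi M d hd Q p h0).f 0) x = 0 at hx
        rw [mkPi_zero] at hx
        obtain ⟨y, hy⟩ := (h0 x).1 hx
        refine ⟨y, ?_⟩
        change (mkCx M d hd).d 1 0 y = x
        rw [mkCx_d]
        exact hy
      · change Epi ((mkPi M d hd Q p h0).f 0)
        rw [mkPi_zero]
        exact (ModuleCat.epi_iff_surjective (ModuleCat.ofHom p)).2 hp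
    | succ m =>
      rw [quasiIsoAt_iff_exactAt' (hL := ChainComplex.exactAt_succ_single_obj ..),
          HomologicalComplex.exactAt_iff' _ (m + 2) (m + 1) m (by simp) (by simp)]
      rw [ShortComplex.moduleCat_exact_iff]
      intro x hx
      change (mkCx M d hd).d (m+1) m x = 0 at hx
      rw [mkCx_d] at hx
      obtain ⟨y, hy⟩ := hex m x hx
      refine ⟨y, ?_⟩
      change (mkCx M d hd).d (m+1+1) (m+1) y = x
      rw [mkCx_d]
      exact hy

/-- projective resolution from an exact sequence of projective modules -/
noncomputable def mkRes (d : ∀ r, M (r+1) →ₗ[A] M r) (hd : ∀ r x, d r (d (r+1) x) = 0)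
    [∀ r, Module.Projective A (M r)] (Q : Type) [AddCommGroup Q] [Module A Q]
    (p : M 0 →ₗ[A] Q) (h0 : ∀ x, p x = 0 ↔ ∃ y, d 0 y = x) (hp : Function.Surjective p) 
    (hex : ∀ r x, d r x = 0 → ∃ y, d (r+1) y = x) :
    ProjectiveResolution (ModuleCat.of A Q) where
  complex := mkCx M d hd
  projective r := (IsProjective.iff_projective (R := A) (M r)).1 inferInstance
  π := mkPi M d hd Q p h0
  quasiIso := mkPi_qi M d hd Q p h0 hp hex

/-- Main interface of the categorical part. -/
theorem lc_main [IsNoetherianRing A] (I : Ideal A) (J : ℕ → Ideal A) (hJ : Antitone J)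
    (hr : ∀ t, I ≤ (J t).radical) (hc : ∀ N, ∃ t, J t ≤ I ^ N)
    [∀ r, Module.Projective A (M r)]
    (d : ∀ (t : ℕ) r, M (r+1) →ₗ[A] M r) (hd : ∀ t r x, d t r (d t (r+1) x) = 0)
    (p : ∀ t, M 0 →ₗ[A] A ⧸ J t) (h0 : ∀ t x, p t x = 0 ↔ ∃ y, d t 0 y = x)
    (hp : ∀ t, Function.Surjective (p t))
    (hex : ∀ t r x, d t r x = 0 → ∃ y, d t (r+1) y = x)
    (τ : ∀ (t t' : ℕ) r, M r →ₗ[A] M r)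
    (hτ : ∀ t t' r x, t ≤ t' → τ t t' r (d t' r x) = d t r (τ t t' (r+1) x))
    (hτp : ∀ t t' x (h : t ≤ t'), p t (τ t t' 0 x) =
      Submodule.mapQ (J t') (J t) LinearMap.id (hJ h) (p t' x))
    (r : ℕ) (Y : Type) [AddCommGroup Y] [Module A Y] :
    ∃ mu : ∀ t, LinearMap.ker (LinearMap.lcomp A Y (d t r)) →ₗ[A]
        (localCohomology I r).obj (ModuleCat.of A Y),
      (∀ y, ∃ t x, mu t x = y) ∧
      (∀ t t' (_ : t ≤ t') x x', x'.1 = x.1 ∘ₗ (τ t t' r) → mu t' x' = mu t x) ∧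
      (∀ t x, mu t x = 0 → ∃ t' , t ≤ t' ∧
        match r, x.1 with
        | 0, ψ => ψ ∘ₗ (τ t t' 0) = 0
        | (r+1), ψ => ∃ w : M r →ₗ[A] Y, w ∘ₗ d t' r = ψ ∘ₗ (τ t t' (r+1))) ∧
      (∀ t x, (match r, x.1 with
        | 0, ψ => ψ = 0
        | (r+1), ψ => ∃ w : M r →ₗ[A] Y, w ∘ₗ d t r = ψ) → mu t x = 0) := by
  obtain ⟨lam, hl1, hl2, hl3⟩ := lc_colim I J hJ hr hc r (ModuleCat.of A Y)
  let P : ∀ t, ProjectiveResolution (ModuleCat.of A (A ⧸ J t)) := fun t =>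
    mkRes M (d t) (hd t) (A ⧸ J t) (p t) (h0 t) (hp t) (hex t)
  have hPd : ∀ t r, (P t).complex.d (r+1) r = ModuleCat.ofHom (d t r) := fun t r =>
    mkCx_d M (d t) (hd t) r
  -- cocycles
  let z : ∀ t, LinearMap.ker (LinearMap.lcomp A Y (d t r)) →ₗ[A]
      extZ (P t) (ModuleCat.of A Y) r := fun t =>
    { toFun := fun ψ => ⟨ModuleCat.ofHom ψ.1, by
        change (P t).complex.d (r+1) r ≫ _ = 0
        rw [hPd]
        ext x
        exact congrArg (fun f => f x) ψ.2⟩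
      map_add' := fun _ _ => rfl
      map_smul' := fun _ _ => rfl }
  have zsurj : ∀ t, Function.Surjective (z t) := by
    intro t ψ
    refine ⟨⟨ψ.1.hom, ?_⟩, rfl⟩
    have h : (P t).complex.d (r+1) r ≫ ψ.1 = 0 := ψ.2
    rw [hPd] at h
    exact congrArg (fun f => f.hom) h
  let φ : ∀ t t' (_ : t ≤ t'), (P t').complex ⟶ (P t).complex := fun t t' h =>
    { f := fun r => ModuleCat.ofHom (τ t t' r)
      comm' := by
        rintro i j ⟨rfl⟩
        rw [hPd, hPd]
        ext x
        exact (hτ t t' _ x h).symm }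
  have hφ : ∀ t t' (h : t ≤ t') r, (φ t t' h).f r = ModuleCat.ofHom (τ t t' r) := fun t t' h r => rfl
  have hcomm : ∀ t t' (h : t ≤ t'), (φ t t' h).f 0 ≫ (P t).π.f 0 = (P t').π.f 0 ≫ qmap (hJ h) := by
    intro t t' h
    have e : ∀ t, (P t).π.f 0 = ModuleCat.ofHom (p t) := fun t =>
      mkPi_zero M (d t) (hd t) _ (p t) (h0 t)
    rw [e, e]
    ext x
    exact hτp t t' x h
  have hecl : ∀ t t' (h : t ≤ t') x x', x'.1 = x.1 ∘ₗ (τ t t' r) →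
      ((Ext A (ModuleCat.{0} A) r).map (qmap (hJ h)).op).app (ModuleCat.of A Y)
        (ecl (P t) (ModuleCat.of A Y) r (z t x)) = ecl (P t') (ModuleCat.of A Y) r (z t' x') := by
    intro t t' h x x' hx
    refine ecl_nat _ _ _ (φ t t' h) (hcomm t t' h) _ _ _ _ ?_
    change _ = ModuleCat.ofHom x'.1
    rw [hx]
    rfl
  refine ⟨fun t => lam t ∘ₗ ecl (P t) (ModuleCat.of A Y) r ∘ₗ z t, ?_, ?_, ?_, ?_⟩
  · intro y
    obtain ⟨t, x, rfl⟩ := hl1 y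
    obtain ⟨x1, hx1⟩ := ecl_surj (P t) (ModuleCat.of A Y) r x
    obtain ⟨x2, hx2⟩ := zsurj t x1
    refine ⟨t, x2, ?_⟩
    simp only [LinearMap.comp_apply]
    rw [hx2, hx1]
  · intro t t' h x x' hx
    simp only [LinearMap.comp_apply]
    rw [← hl2 t t' h, hecl t t' h x x' hx]
  · intro t x hx
    obtain ⟨t', h, h2⟩ := hl3 t _ hx
    refine ⟨t', h, ?_⟩
    have hx' : x.1 ∘ₗ (τ t t' r) ∈ LinearMap.ker (LinearMap.lcomp A Y (d t' r)) := by
      ext y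
      have := congrArg (fun f => f (τ t t' (r+1) y)) x.2
      simp only [LinearMap.lcomp_apply, LinearMap.zero_apply, LinearMap.comp_apply] at this ⊢
      rw [hτ t t' r y h, this]
    rw [LinearMap.comp_apply, hecl t t' h x ⟨_, hx'⟩ rfl] at h2
    cases r with
    | zero =>
      have h3 := (ecl_zero_zero (P t') (ModuleCat.of A Y) (z t' ⟨_, hx'⟩)).1 h2
      exact congrArg (fun f => f.1.hom) h3
    | succ r =>
      obtain ⟨w, hw⟩ := (ecl_zero_succ (P t') (ModuleCat.of A Y) r (z t' ⟨_, hx'⟩)).1 h2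
      rw [hPd] at hw
      exact ⟨w.hom, congrArg (fun f => f.hom) hw⟩
  · intro t x hx
    simp only [LinearMap.comp_apply]
    suffices ecl (P t) (ModuleCat.of A Y) r (z t x) = 0 by rw [this, map_zero]
    cases r with
    | zero =>
      rw [ecl_zero_zero]
      apply Subtype.ext
      exact congrArg ModuleCat.ofHom hx
    | succ r =>
      rw [ecl_zero_succ]
      obtain ⟨w, hw⟩ := hx
      refine ⟨ModuleCat.ofHom w, ?_⟩
      rw [hPd]
      exact congrArg ModuleCat.ofHom hw
end PartC3

section PartR
open MvPolynomial

/-- union of a tuple -/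
def un {n : ℕ} {S : Finset (Finset (Fin n))} {r : ℕ} (T : Fin r → ↥S) : Finset (Fin n) :=
  Finset.univ.biUnion fun i => (T i).1

lemma mem_un {n : ℕ} {S : Finset (Finset (Fin n))} {r : ℕ} (T : Fin r → ↥S) (j : Fin n) :
    j ∈ un T ↔ ∃ i, j ∈ (T i).1 := by simp [un]

lemma un_cons {n : ℕ} {S : Finset (Finset (Fin n))} {r : ℕ} (T : Fin r → ↥S) (s : ↥S) :
    un (Fin.cons s T : Fin (r+1) → ↥S) = s.1 ∪ un T := by
  ext j
  simp [mem_un, Fin.exists_fin_succ]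

lemma un_face {n : ℕ} {S : Finset (Finset (Fin n))} {r : ℕ} (T : Fin (r+1) → ↥S) (i : Fin (r+1)) :
    un (T ∘ i.succAbove) ⊆ un T := by
  intro j
  simp only [mem_un, Function.comp]
  rintro ⟨l, hl⟩
  exact ⟨_, hl⟩

lemma cons_face {X : Type*} {r : ℕ} (T : Fin (r+1) → X) (s : X) (i : Fin (r+1)) :
    (Fin.cons s T : Fin (r+2) → X) ∘ (i.succ).succAbove = Fin.cons s (T ∘ i.succAbove) := by
  funext l
  refine Fin.cases ?_ (fun l => ?_) l
  · simp
  · simp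

lemma cons_face_zero {X : Type*} {r : ℕ} (T : Fin r → X) (s : X) :
    (Fin.cons s T : Fin (r+1) → X) ∘ (0 : Fin (r+1)).succAbove = T := by
  funext l
  simp

variable {n : ℕ} {k : Type} [Field k] {S : Finset (Finset (Fin n))}

/-- the monomial `x_U^t` -/
noncomputable def xm (k : Type) [Field k] {n : ℕ} (t : ℕ) (U : Finset (Fin n)) : MvPolynomial (Fin n) k :=
  ∏ i ∈ U, X i ^ t

lemma xm_sdiff (t : ℕ) {U V : Finset (Fin n)} (h : U ⊆ V) : xm k t (V \ U) * xm k t U = xm k t V :=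
  Finset.prod_sdiff h

lemma xm_add (t t' : ℕ) (U : Finset (Fin n)) : xm k (t + t') U = xm k t U * xm k t' U := by
  simp [xm, pow_add, Finset.prod_mul_distrib]

lemma xm_empty (t : ℕ) : xm k t (∅ : Finset (Fin n)) = 1 := by simp [xm]

/-- the vector `t * 1_U` -/
def uz {n : ℕ} (t : ℕ) (U : Finset (Fin n)) : Fin n → ℤ := fun i => if i ∈ U then (t : ℤ) else 0

/-- coefficient extended by zero to integer exponents -/
noncomputable def co (k : Type) [Field k] {n : ℕ} (c : Fin n → ℤ) : MvPolynomial (Fin n) k →ₗ[k] k :=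
  open Classical in
  if ∀ i, 0 ≤ c i then MvPolynomial.lcoeff k (Finsupp.equivFunOnFinite.symm fun i => (c i).toNat) else 0

lemma co_cast (e : Fin n →₀ ℕ) (a : MvPolynomial (Fin n) k) :
    co k (fun i => (e i : ℤ)) a = coeff e a := by
  rw [co, if_pos (fun i => by positivity)]
  simp only [lcoeff_apply]
  congr 1
  ext i
  simp

lemma co_neg {c : Fin n → ℤ} (h : ¬ ∀ i, 0 ≤ c i) (a : MvPolynomial (Fin n) k) : co k c a = 0 := by
  rw [co, if_neg h]; rfl

lemma co_cases (c : Fin n → ℤ) : (∃ e : Fin n →₀ ℕ, c = fun i => (e i : ℤ)) ∨ ¬ ∀ i, 0 ≤ c i := by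
  by_cases h : ∀ i, 0 ≤ c i
  · left
    refine ⟨Finsupp.equivFunOnFinite.symm fun i => (c i).toNat, ?_⟩
    funext i
    simp [h i]
  · exact Or.inr h

lemma co_ext {a b : MvPolynomial (Fin n) k} (h : ∀ c, co k c a = co k c b) : a = b := by
  ext e
  rw [← co_cast, ← co_cast, h]

lemma co_X (c : Fin n → ℤ) (i : Fin n) (a : MvPolynomial (Fin n) k) :
    co k c (X i * a) = co k (c - Pi.single i 1) a := by
  rcases co_cases c with ⟨e, rfl⟩ | h
  · rw [co_cast, coeff_X_mul']
    split_ifs with hi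
    · rw [← co_cast]
      congr 2
      funext j
      have : e i ≠ 0 := by simpa using hi
      by_cases hj : j = i
      · subst hj
        simp
        omega
      · simp [hj]
    · rw [co_neg]
      intro h
      have := h i
      simp at hi
      simp [hi] at this
  · rw [co_neg h, co_neg]
    intro h'
    apply h
    intro j
    have := h' j
    have h1 : (0:ℤ) ≤ (Pi.single i 1 : Fin n → ℤ) j := by
      by_cases hj : j = i
      · subst hj; simp
      · simp [hj]
    simp only [Pi.sub_apply] at this
    omega

lemma co_X_pow (t : ℕ) (c : Fin n → ℤ) (i : Fin n) (a : MvPolynomial (Fin n) k) :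
    co k c (X i ^ t * a) = co k (c - Pi.single i (t : ℤ)) a := by
  induction t generalizing c with
  | zero => simp
  | succ t ih =>
    rw [pow_succ', mul_assoc, co_X, ih]
    congr 2
    rw [sub_sub, ← Pi.single_add]
    congr 2
    push_cast; ring

lemma co_xm (t : ℕ) (U : Finset (Fin n)) (c : Fin n → ℤ) (a : MvPolynomial (Fin n) k) :
    co k c (xm k t U * a) = co k (c - uz t U) a := by
  induction U using Finset.induction generalizing c with
  | empty =>
    rw [xm_empty, one_mul]
    congr 2
    funext i
    simp [uz]
  | insert i U hi ih =>
    rw [xm, Finset.prod_insert hi, mul_assoc, co_X_pow]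
    refine (ih _).trans ?_
    congr 2
    funext j
    by_cases hj : j = i
    · subst hj; simp [uz, hi]
    · simp [uz, hj]

lemma xm_ne_zero (t : ℕ) (U : Finset (Fin n)) : xm k t U ≠ 0 := by
  rw [xm, Finset.prod_ne_zero_iff]
  intro i _
  exact pow_ne_zero _ (X_ne_zero i)

/-- a polynomial whose exponents are all at least `t 1_U` is divisible by `x_U^t` -/
lemma xm_dvd (t : ℕ) (U : Finset (Fin n)) (a : MvPolynomial (Fin n) k)
    (h : ∀ e ∈ a.support, ∀ i ∈ U, t ≤ e i) : xm k t U ∣ a := by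
  rw [a.as_sum]
  refine Finset.dvd_sum fun e he => ?_
  rw [monomial_eq, xm]
  refine Dvd.dvd.mul_left ?_ _
  rw [Finsupp.prod_fintype _ _ (by simp)]
  refine (Finset.prod_dvd_prod_of_dvd _ (fun i => X i ^ (e i)) fun i hi => pow_dvd_pow _ (h e he i hi)).trans ?_
  exact Finset.prod_dvd_prod_of_subset _ _ _ (Finset.subset_univ _)

lemma le_of_xm_dvd (t : ℕ) (U : Finset (Fin n)) (a : MvPolynomial (Fin n) k) (hd : xm k t U ∣ a)
    (e) (he : e ∈ a.support) (i) (hi : i ∈ U) : t ≤ e i := by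
  obtain ⟨b, rfl⟩ := hd
  rw [mem_support_iff, ← co_cast, co_xm] at he
  by_contra h
  apply he
  rw [co_neg]
  intro h'
  have := h' i
  simp [uz, hi] at this
  omega

variable (k S) in
/-- terms of the Taylor-type resolution -/
abbrev MM (r : ℕ) : Type := (Fin r → ↥S) →₀ MvPolynomial (Fin n) k

variable (k S) in
/-- plain boundary -/
noncomputable def pbd (r : ℕ) : MM k S (r+1) →ₗ[MvPolynomial (Fin n) k] MM k S r :=
  Finsupp.lsum (MvPolynomial (Fin n) k) fun T => ∑ i : Fin (r+1),
    ((-1 : MvPolynomial (Fin n) k) ^ (i:ℕ)) • Finsupp.lsingle (T ∘ i.succAbove)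

variable (k S) in
/-- weighted boundary -/
noncomputable def wbd (t r : ℕ) : MM k S (r+1) →ₗ[MvPolynomial (Fin n) k] MM k S r :=
  Finsupp.lsum (MvPolynomial (Fin n) k) fun T => ∑ i : Fin (r+1),
    ((-1 : MvPolynomial (Fin n) k) ^ (i:ℕ) * xm k t (un T \ un (T ∘ i.succAbove))) •
      Finsupp.lsingle (T ∘ i.succAbove)

variable (k S) in
/-- multiplication by `x_{un T}^t` -/
noncomputable def jm (t r : ℕ) : MM k S r →ₗ[MvPolynomial (Fin n) k] MM k S r :=
  Finsupp.lsum (MvPolynomial (Fin n) k) fun T => xm k t (un T) • Finsupp.lsingle T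

lemma pbd_single (r : ℕ) (T : Fin (r+1) → ↥S) (a : MvPolynomial (Fin n) k) :
    pbd k S r (Finsupp.single T a) = ∑ i : Fin (r+1), Finsupp.single (T ∘ i.succAbove) ((-1)^(i:ℕ) * a) := by
  simp [pbd]

lemma wbd_single (t r : ℕ) (T : Fin (r+1) → ↥S) (a : MvPolynomial (Fin n) k) :
    wbd k S t r (Finsupp.single T a) = ∑ i : Fin (r+1), Finsupp.single (T ∘ i.succAbove)
      ((-1)^(i:ℕ) * xm k t (un T \ un (T ∘ i.succAbove)) * a) := by
  simp [wbd]

lemma jm_single (t r : ℕ) (T : Fin r → ↥S) (a : MvPolynomial (Fin n) k) :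
    jm k S t r (Finsupp.single T a) = Finsupp.single T (xm k t (un T) * a) := by
  simp [jm]

lemma jm_apply (t r : ℕ) (x : MM k S r) (T) : jm k S t r x T = xm k t (un T) * x T := by
  induction x using Finsupp.induction_linear with
  | zero => simp
  | add f g hf hg => rw [map_add, Finsupp.add_apply, hf, hg, Finsupp.add_apply, mul_add]
  | single T' a =>
    rw [jm_single]
    by_cases h : T' = T
    · subst h; simp
    · simp [h]

lemma jm_inj (t r : ℕ) : Function.Injective (jm k S t r) := by
  rw [← LinearMap.ker_eq_bot, LinearMap.ker_eq_bot']
  intro x hx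
  ext1 T
  have := congrArg (fun f => f T) hx
  simp only [jm_apply, Finsupp.zero_apply] at this
  exact (mul_eq_zero.1 this).resolve_left (xm_ne_zero _ _)

lemma jm_wbd (t r : ℕ) (x) : jm k S t r (wbd k S t r x) = pbd k S r (jm k S t (r+1) x) := by
  induction x using Finsupp.induction_linear with
  | zero => simp
  | add f g hf hg => simp only [map_add, hf, hg]
  | single T a =>
    rw [wbd_single, jm_single, pbd_single, map_sum]
    refine Finset.sum_congr rfl fun i _ => ?_
    rw [jm_single, ← xm_sdiff t (un_face T i)]
    congr 1
    ring

lemma jm_jm (t t' r : ℕ) (x) : jm k S t r (jm k S t' r x) = jm k S (t + t') r x := by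
  ext1 T
  simp only [jm_apply, xm_add, mul_assoc]

variable (k S) in
/-- prepend an element -/
noncomputable def pcons (s : ↥S) (r : ℕ) (f : MvPolynomial (Fin n) k →ₗ[k] MvPolynomial (Fin n) k) :
    MM k S r →ₗ[k] MM k S (r+1) :=
  Finsupp.lsum k fun T => Finsupp.lsingle (Fin.cons s T) ∘ₗ f

lemma pcons_single (s : ↥S) (r : ℕ) (f) (T : Fin r → ↥S) (a : MvPolynomial (Fin n) k) :
    pcons k S s r f (Finsupp.single T a) = Finsupp.single (Fin.cons s T) (f a) := by
  simp [pcons]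

lemma neg_one_pow_mul_map (f : MvPolynomial (Fin n) k →ₗ[k] MvPolynomial (Fin n) k) (i : ℕ) (a) :
    f ((-1)^i * a) = (-1)^i * f a := by
  rcases neg_one_pow_eq_or (MvPolynomial (Fin n) k) i with h | h <;> simp [h]

lemma pbd_pcons (s : ↥S) (r : ℕ) (f) (x : MM k S (r+1)) :
    pbd k S (r+1) (pcons k S s (r+1) f x) = 
      x.mapRange f (map_zero f) - pcons k S s r f (pbd k S r x) := by
  induction x using Finsupp.induction_linear with
  | zero => simp
  | add g h hg hh =>
    simp only [map_add, hg, hh]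
    rw [Finsupp.mapRange_add (map_add f)]
    abel
  | single T a =>
    rw [pcons_single, pbd_single, pbd_single, Fin.sum_univ_succ, Finsupp.mapRange_single, map_sum,
      cons_face_zero, sub_eq_add_neg, ← Finset.sum_neg_distrib]
    congr 1
    · simp
    refine Finset.sum_congr rfl fun i _ => ?_
    rw [cons_face, pcons_single, neg_one_pow_mul_map, ← Finsupp.single_neg]
    congr 1
    simp [pow_succ]

lemma pbd_pcons_zero (s : ↥S) (f) (x : MM k S 0) :
    pbd k S 0 (pcons k S s 0 f x) = x.mapRange f (map_zero f) := by
  induction x using Finsupp.induction_linear with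
  | zero => simp
  | add g h hg hh =>
    simp only [map_add, hg, hh]
    rw [Finsupp.mapRange_add (map_add f)]
  | single T a =>
    rw [pcons_single, pbd_single, Fin.sum_univ_succ, Finsupp.mapRange_single, cons_face_zero]
    simp

lemma pbd_pbd (r : ℕ) (x) : pbd k S r (pbd k S (r+1) x) = 0 := by
  induction r with
  | zero =>
    induction x using Finsupp.induction_linear with
    | zero => simp
    | add g h hg hh => simp only [map_add, hg, hh, add_zero]
    | single T a =>
      rw [← Fin.cons_self_tail T, ← LinearMap.id_apply (R := k) a, ← pcons_single, pbd_pcons, map_sub,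
        pbd_pcons_zero]
      simp [Finsupp.mapRange_id]
  | succ r ih =>
    induction x using Finsupp.induction_linear with
    | zero => simp
    | add g h hg hh => simp only [map_add, hg, hh, add_zero]
    | single T a =>
      rw [← Fin.cons_self_tail T, ← LinearMap.id_apply (R := k) a, ← pcons_single, pbd_pcons, map_sub,
        pbd_pcons, ih]
      simp [Finsupp.mapRange_id]

lemma wbd_wbd (t r : ℕ) (x) : wbd k S t r (wbd k S t (r+1) x) = 0 := by
  apply jm_inj t
  rw [jm_wbd, jm_wbd, pbd_pbd, map_zero]

lemma jm_wbd_comm (t t' r : ℕ) (h : t ≤ t') (x) :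
    jm k S (t' - t) r (wbd k S t' r x) = wbd k S t r (jm k S (t' - t) (r+1) x) := by
  apply jm_inj t
  rw [jm_jm, jm_wbd, jm_jm, Nat.add_sub_cancel' h, jm_wbd]

lemma pcons_apply_cons (s s' : ↥S) (r : ℕ) (f) (x : MM k S r) (T) :
    pcons k S s r f x (Fin.cons s' T) = if s = s' then f (x T) else 0 := by
  induction x using Finsupp.induction_linear with
  | zero => simp
  | add g h hg hh =>
    rw [map_add, Finsupp.add_apply, hg, hh, Finsupp.add_apply, map_add]
    split_ifs <;> simp
  | single T' a =>
    rw [pcons_single, Finsupp.single_apply, Finsupp.single_apply]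
    simp only [Fin.cons_inj]
    split_ifs <;> simp_all

open Classical in
/-- restriction of a polynomial to the exponents satisfying `p` -/
noncomputable def prj (p : (Fin n →₀ ℕ) → Prop) : MvPolynomial (Fin n) k →ₗ[k] MvPolynomial (Fin n) k :=
  (MvPolynomial.basisMonomials (Fin n) k).constr k fun e => if p e then monomial e 1 else 0

open Classical in
lemma coeff_prj (p : (Fin n →₀ ℕ) → Prop) (a : MvPolynomial (Fin n) k) (e) :
    coeff e (prj p a) = if p e then coeff e a else 0 := by
  suffices h : lcoeff k e ∘ₗ prj p = if p e then lcoeff k e else 0 by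
    have := congrArg (fun f => f a) h
    simp only [LinearMap.comp_apply, lcoeff_apply] at this
    rw [this]
    split_ifs <;> simp
  refine (MvPolynomial.basisMonomials (Fin n) k).ext fun e' => ?_
  rw [LinearMap.comp_apply, prj, Module.Basis.constr_basis, coe_basisMonomials]
  by_cases h : e' = e
  · subst h
    split_ifs <;> simp
  · split_ifs <;> simp [coeff_monomial, h]

lemma mm_exact (t r : ℕ) (x : MM k S (r+1)) (hx : wbd k S t r x = 0) :
    ∃ y, wbd k S t (r+1) y = x := by
  classical
  -- selection of a generator for every exponent
  let good : (Fin n →₀ ℕ) → ↥S → Prop := fun e s => ∀ i ∈ s.1, t ≤ e i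
  let sel : (Fin n →₀ ℕ) → ↥S → Prop := fun e s =>
    if h : ∃ s, good e s then h.choose = s else False
  have sel_good : ∀ e s, sel e s → good e s := by
    intro e s h
    by_cases h' : ∃ s, good e s
    · simp only [sel, dif_pos h'] at h
      rw [← h]
      exact h'.choose_spec
    · simp only [sel, dif_neg h'] at h
  let pr : ↥S → MvPolynomial (Fin n) k →ₗ[k] MvPolynomial (Fin n) k := fun s =>
    prj (fun e => sel e s)
  have hpr : ∀ a : MvPolynomial (Fin n) k, (∀ e ∈ a.support, ∃ s, good e s) → ∑ s, pr s a = a := by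
    intro a ha
    ext e
    rw [coeff_sum]
    simp only [pr, coeff_prj]
    by_cases he : e ∈ a.support
    · have h' := ha e he
      simp only [sel, dif_pos h']
      simp
    · simp only [mem_support_iff, not_not] at he
      simp [he]
  let z : MM k S (r+2) := ∑ s, pcons k S s (r+1) (pr s) (jm k S t (r+1) x)
  have hz : pbd k S (r+1) z = jm k S t (r+1) x := by
    simp only [z, map_sum, pbd_pcons, ← jm_wbd, hx, map_zero, sub_zero]
    ext1 T
    rw [Finsupp.finsetSum_apply]
    simp only [Finsupp.mapRange_apply]
    apply hpr
    intro e he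
    refine ⟨T 0, fun i hi => le_of_xm_dvd t (un T) (k := k) _ ?_ e he i ((mem_un _ _).2 ⟨0, hi⟩)⟩
    rw [jm_apply]
    exact dvd_mul_right _ _
  have hzd : ∀ T, xm k t (un T) ∣ z T := by
    intro T
    rw [← Fin.cons_self_tail T]
    generalize T 0 = s
    generalize Fin.tail T = T
    have : z (Fin.cons s T) = pr s (jm k S t (r+1) x T) := by
      simp only [z, Finsupp.finsetSum_apply, pcons_apply_cons]
      simp
    rw [this]
    apply xm_dvd
    intro e he i hi
    simp only [pr, mem_support_iff, coeff_prj, ne_eq, ite_eq_right_iff, Classical.not_imp] at he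
    rw [un_cons, Finset.mem_union] at hi
    rcases hi with hi | hi
    · exact sel_good e s he.1 i hi
    · refine le_of_xm_dvd t (un T) (k := k) _ ?_ e (mem_support_iff.2 he.2) i hi
      rw [jm_apply]
      exact dvd_mul_right _ _
  choose y hy using hzd
  refine ⟨Finsupp.equivFunOnFinite.symm y, ?_⟩
  apply jm_inj t
  rw [jm_wbd, ← hz]
  congr 1
  ext1 T
  rw [jm_apply, hy]
  rfl

variable (k S) in
/-- the ideal generated by `x_s^t` -/
noncomputable def JJ (t : ℕ) : Ideal (MvPolynomial (Fin n) k) :=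
  Ideal.span (Set.range fun s : ↥S => xm k t s.1)

lemma JJ_anti : Antitone (JJ k S) := by
  intro t t' h
  rw [JJ, Ideal.span_le]
  rintro _ ⟨s, rfl⟩
  change xm k t' s.1 ∈ JJ k S t
  rw [← Nat.add_sub_cancel' h, xm_add]
  exact Ideal.mul_mem_right _ _ (Ideal.subset_span ⟨s, rfl⟩)

variable (k S) in
/-- augmentation -/
noncomputable def paug (t : ℕ) : MM k S 0 →ₗ[MvPolynomial (Fin n) k] MvPolynomial (Fin n) k ⧸ JJ k S t :=
  (JJ k S t).mkQ ∘ₗ Finsupp.lapply default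

lemma paug_zero_iff (t : ℕ) (x) : paug k S t x = 0 ↔ x default ∈ JJ k S t := by
  rw [paug, LinearMap.comp_apply, Submodule.mkQ_apply, Submodule.Quotient.mk_eq_zero]
  rfl

lemma paug_surj (t : ℕ) : Function.Surjective (paug k S t) := by
  intro y
  obtain ⟨a, rfl⟩ := (JJ k S t).mkQ_surjective y
  exact ⟨Finsupp.single default a, by simp [paug]⟩

lemma wbd_zero_single (t : ℕ) (T : Fin 1 → ↥S) (a : MvPolynomial (Fin n) k) :
    wbd k S t 0 (Finsupp.single T a) = Finsupp.single default (xm k t (T 0).1 * a) := by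
  rw [wbd_single, Fin.sum_univ_succ]
  simp only [Finset.univ_eq_empty, Finset.sum_empty, add_zero]
  have : un T \ un (T ∘ (0 : Fin 1).succAbove) = (T 0).1 := by
    ext j; simp [mem_un]
  rw [this, Subsingleton.elim (T ∘ (0 : Fin 1).succAbove) default]
  simp

lemma paug_exact (t : ℕ) (x) : paug k S t x = 0 ↔ ∃ y, wbd k S t 0 y = x := by
  constructor
  · intro h
    rw [paug_zero_iff, JJ, Ideal.mem_span_range_iff_exists_fun] at h
    obtain ⟨c, hc⟩ := h
    refine ⟨∑ s, Finsupp.single (fun _ => s) (c s), ?_⟩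
    rw [map_sum]
    simp only [wbd_zero_single]
    refine Finsupp.ext fun T => ?_
    rw [Subsingleton.elim T default, ← hc, Finsupp.finsetSum_apply]
    simp [mul_comm]
  · rintro ⟨y, rfl⟩
    induction y using Finsupp.induction_linear with
    | zero => simp
    | add g h hg hh => simp only [map_add, hg, hh, add_zero]
    | single T a =>
      rw [wbd_zero_single]
      rw [paug_zero_iff, JJ, Finsupp.single_eq_same]
      exact Ideal.mul_mem_right _ _ (Ideal.subset_span ⟨T 0, rfl⟩)

lemma paug_tau (t t' : ℕ) (x) (h : t ≤ t') : paug k S t (jm k S (t' - t) 0 x) =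
      Submodule.mapQ (JJ k S t') (JJ k S t) LinearMap.id (JJ_anti h) (paug k S t' x) := by
  have : un (default : Fin 0 → ↥S) = ∅ := by simp [un]
  have h2 : jm k S (t' - t) 0 x = x := by
    refine Finsupp.ext fun T => ?_
    rw [Subsingleton.elim T default, jm_apply, this, xm_empty, one_mul]
  rw [h2]
  rfl

variable (k S) in
/-- coboundaries at level `t` -/
def isCob (t : ℕ) : ∀ (r : ℕ), (MM k S r →ₗ[MvPolynomial (Fin n) k] (MvPolynomial (Fin n) k)) → Prop
  | 0, ψ => ψ = 0
  | (r+1), ψ => ∃ w : MM k S r →ₗ[MvPolynomial (Fin n) k] (MvPolynomial (Fin n) k), w ∘ₗ wbd k S t r = ψ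

theorem lc_taylor (I : Ideal (MvPolynomial (Fin n) k))
    (hI : I = Ideal.span
      ((fun s : Finset (Fin n) => ∏ i ∈ s, MvPolynomial.X i) '' (S : Set (Finset (Fin n))))) (r : ℕ) :
    ∃ mu : ∀ t, LinearMap.ker (LinearMap.lcomp (MvPolynomial (Fin n) k) (MvPolynomial (Fin n) k)
        (wbd k S t r)) →ₗ[MvPolynomial (Fin n) k] LC k I r,
      (∀ y, ∃ t x, mu t x = y) ∧
      (∀ t t' (_ : t ≤ t') x x', x'.1 = x.1 ∘ₗ (jm k S (t' - t) r) → mu t' x' = mu t x) ∧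
      (∀ t x, mu t x = 0 → ∃ t' , t ≤ t' ∧ isCob k S t' r (x.1 ∘ₗ (jm k S (t' - t) r))) ∧
      (∀ t x, isCob k S t r x.1 → mu t x = 0) := by
  have hx : ∀ (t : ℕ) (s : Finset (Fin n)), (∏ i ∈ s, (X i : MvPolynomial (Fin n) k)) ^ t = xm k t s := by
    intro t s
    rw [xm, Finset.prod_pow]
  have key := fun h1 h2 => lc_main (MM k S) I (JJ k S) JJ_anti h1 h2 (wbd k S) wbd_wbd (paug k S)
    paug_exact paug_surj mm_exact (fun t t' r => jm k S (t' - t) r)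
    (fun t t' r x h => jm_wbd_comm t t' r h x) paug_tau r (MvPolynomial (Fin n) k)
  have key2 := key ?_ ?_
  · cases r <;> exact key2
  · intro t
    rw [hI, Ideal.span_le]
    rintro _ ⟨s, hs, rfl⟩
    refine ⟨t, ?_⟩
    simp only [hx]
    exact Ideal.subset_span ⟨⟨s, hs⟩, rfl⟩
  · intro N
    refine ⟨N, ?_⟩
    rw [JJ, Ideal.span_le]
    rintro _ ⟨s, rfl⟩
    change xm k N s.1 ∈ I ^ N
    rw [← hx]
    refine Ideal.pow_mem_pow ?_ _
    rw [hI]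
    exact Ideal.subset_span ⟨s.1, s.2, rfl⟩
end PartR

section PartG
open MvPolynomial
variable {n : ℕ} {k : Type} [Field k] {S : Finset (Finset (Fin n))}

variable (k S) in
/-- Čech coboundary on tuples -/
def cbd (r : ℕ) : ((Fin r → ↥S) → k) →ₗ[k] ((Fin (r+1) → ↥S) → k) where
  toFun f := fun T => ∑ i : Fin (r+1), (-1)^(i:ℕ) * f (T ∘ i.succAbove)
  map_add' f g := by funext T; simp [mul_add, Finset.sum_add_distrib]
  map_smul' c f := by
    funext T
    simp only [Pi.smul_apply, smul_eq_mul, RingHom.id_apply, Finset.mul_sum]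
    exact Finset.sum_congr rfl fun i _ => by ring

variable (k S) in
/-- cochains supported on tuples whose union contains `N` -/
def CC (N : Finset (Fin n)) (r : ℕ) : Submodule k ((Fin r → ↥S) → k) where
  carrier := {f | ∀ T, ¬ N ⊆ un T → f T = 0}
  zero_mem' := fun _ _ => rfl
  add_mem' := fun hf hg T hT => by simp [hf T hT, hg T hT]
  smul_mem' := fun c f hf T hT => by simp [hf T hT]

variable (k S) in
/-- cocycles -/
def CZ (N : Finset (Fin n)) (r : ℕ) : Submodule k ((Fin r → ↥S) → k) :=
  CC k S N r ⊓ LinearMap.ker (cbd k S r)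

variable (k S) in
/-- coboundaries -/
def CB (N : Finset (Fin n)) : ∀ r, Submodule k ((Fin r → ↥S) → k)
  | 0 => ⊥
  | (r+1) => (CC k S N r).map (cbd k S r)

/-- negative part -/
def ng {n : ℕ} (b : Fin n → ℤ) : Finset (Fin n) := Finset.univ.filter fun i => b i < 0

/-- monomial extended by zero to integer exponents -/
noncomputable def mo (k : Type) [Field k] {n : ℕ} (c : Fin n → ℤ) : k →ₗ[k] MvPolynomial (Fin n) k :=
  open Classical in
  if ∀ i, 0 ≤ c i then MvPolynomial.monomial (Finsupp.equivFunOnFinite.symm fun i => (c i).toNat) else 0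

lemma mo_cast (e : Fin n →₀ ℕ) (x : k) :
    mo k (fun i => (e i : ℤ)) x = monomial e x := by
  rw [mo, if_pos (fun i => by positivity)]
  congr 2
  ext i
  simp

lemma co_mo_ne {c c' : Fin n → ℤ} (h : c' ≠ c) (x : k) : co k c' (mo k c x) = 0 := by
  rcases co_cases c with ⟨e, rfl⟩ | h1
  · rcases co_cases c' with ⟨e', rfl⟩ | h2
    · rw [mo_cast, co_cast, coeff_monomial, if_neg]
      rintro rfl
      exact h rfl
    · exact co_neg h2 _
  · rw [mo, if_neg h1]; simp

lemma co_mo_eq {c : Fin n → ℤ} (h : ∀ i, 0 ≤ c i) (x : k) : co k c (mo k c x) = x := by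
  rcases co_cases c with ⟨e, rfl⟩ | h1
  · rw [mo_cast, co_cast, coeff_monomial, if_pos rfl]
  · exact absurd h h1

variable (k S) in
/-- component of degree `b` of a cochain of level `t` -/
noncomputable def dcmp (t : ℕ) (b : Fin n → ℤ) {r : ℕ} 
    (ψ : MM k S r →ₗ[MvPolynomial (Fin n) k] MvPolynomial (Fin n) k) : (Fin r → ↥S) → k :=
  fun T => co k (b + uz t (un T)) (ψ (Finsupp.single T 1))

variable (k S) in
/-- homogeneous cochain of degree `b` and level `t` -/
noncomputable def mkb (t : ℕ) (b : Fin n → ℤ) {r : ℕ} (f : (Fin r → ↥S) → k) :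
    MM k S r →ₗ[MvPolynomial (Fin n) k] MvPolynomial (Fin n) k :=
  Finsupp.lsum (MvPolynomial (Fin n) k) fun T => LinearMap.toSpanSingleton _ _ (mo k (b + uz t (un T)) (f T))

lemma mkb_single (t : ℕ) (b : Fin n → ℤ) {r : ℕ} (f : (Fin r → ↥S) → k) (T) :
    mkb k S t b f (Finsupp.single T 1) = mo k (b + uz t (un T)) (f T) := by
  simp [mkb]

/-- admissibility -/
def adm (t : ℕ) (b : Fin n → ℤ) {r : ℕ} (f : (Fin r → ↥S) → k) : Prop :=
  ∀ T, f T ≠ 0 → ∀ i, 0 ≤ (b + uz t (un T)) i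

lemma uz_sdiff (t : ℕ) {U V : Finset (Fin n)} (h : U ⊆ V) : uz t V - uz t (V \ U) = uz t U := by
  funext i
  by_cases h1 : i ∈ U
  · simp [uz, h1, h h1]
  · by_cases h2 : i ∈ V <;> simp [uz, h1, h2]

lemma dcmp_wbd (t : ℕ) (b : Fin n → ℤ) {r : ℕ} (ψ : MM k S r →ₗ[MvPolynomial (Fin n) k] MvPolynomial (Fin n) k) :
    dcmp k S t b (ψ ∘ₗ wbd k S t r) = cbd k S r (dcmp k S t b ψ) := by
  funext T
  simp only [dcmp, LinearMap.comp_apply, wbd_single, map_sum, cbd, LinearMap.coe_mk, AddHom.coe_mk]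
  refine Finset.sum_congr rfl fun i _ => ?_
  have : ψ (Finsupp.single (T ∘ i.succAbove) ((-1)^(i:ℕ) * xm k t (un T \ un (T ∘ i.succAbove)) * 1))
      = xm k t (un T \ un (T ∘ i.succAbove)) * (((-1 : k)^(i:ℕ)) • ψ (Finsupp.single (T ∘ i.succAbove) 1)) := by
    rw [← smul_eq_mul, ← Finsupp.smul_single, map_smul, smul_eq_mul, MvPolynomial.smul_eq_C_mul]
    simp only [map_pow, map_neg, map_one]
    ring
  rw [this, co_xm, map_smul, smul_eq_mul, add_sub_assoc, uz_sdiff t (un_face T i)]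

lemma dcmp_jm (t t' : ℕ) (h : t ≤ t') (b : Fin n → ℤ) {r : ℕ}
    (ψ : MM k S r →ₗ[MvPolynomial (Fin n) k] MvPolynomial (Fin n) k) :
    dcmp k S t' b (ψ ∘ₗ jm k S (t' - t) r) = dcmp k S t b ψ := by
  funext T
  simp only [dcmp, LinearMap.comp_apply, jm_single]
  rw [← smul_eq_mul, ← Finsupp.smul_single, map_smul, smul_eq_mul, co_xm]
  congr 2
  funext i
  simp only [uz, Pi.sub_apply, Pi.add_apply]
  split_ifs <;> push_cast [h] <;> ring

lemma dcmp_ext (t : ℕ) {r : ℕ} {ψ ψ' : MM k S r →ₗ[MvPolynomial (Fin n) k] MvPolynomial (Fin n) k}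
    (h : ∀ b, dcmp k S t b ψ = dcmp k S t b ψ') : ψ = ψ' := by
  refine Finsupp.lhom_ext' fun T => LinearMap.ext_ring ?_
  simp only [LinearMap.comp_apply, Finsupp.lsingle_apply]
  apply co_ext
  intro c
  have := congrArg (fun f => f T) (h (c - uz t (un T)))
  simpa [dcmp] using this

lemma dcmp_mkb_ne (t : ℕ) {b b' : Fin n → ℤ} (h : b' ≠ b) {r : ℕ} (f : (Fin r → ↥S) → k) :
    dcmp k S t b' (mkb k S t b f) = 0 := by
  funext T
  simp only [dcmp, mkb_single, Pi.zero_apply]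
  apply co_mo_ne
  intro h'
  exact h (add_right_cancel h')

lemma dcmp_mkb_eq (t : ℕ) (b : Fin n → ℤ) {r : ℕ} (f : (Fin r → ↥S) → k) (hf : adm t b f) :
    dcmp k S t b (mkb k S t b f) = f := by
  funext T
  simp only [dcmp, mkb_single]
  by_cases h : f T = 0
  · simp [h]
  · exact co_mo_eq (hf T h) _

lemma dcmp_adm (t : ℕ) (b : Fin n → ℤ) {r : ℕ} (ψ : MM k S r →ₗ[MvPolynomial (Fin n) k] MvPolynomial (Fin n) k) :
    adm t b (dcmp k S t b ψ) := by
  intro T hT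
  by_contra h
  exact hT (co_neg h _)

lemma adm_mem (t : ℕ) (b : Fin n → ℤ) {r : ℕ} (f : (Fin r → ↥S) → k) (hf : adm t b f) : f ∈ CC k S (ng b) r := by
  intro T hT
  by_contra h
  apply hT
  intro i hi
  have := hf T h i
  simp only [ng, Finset.mem_filter, Finset.mem_univ, true_and, uz, Pi.add_apply] at hi this
  by_contra h'
  simp [h'] at this
  omega

/-- a level sufficient for degree `b` -/
def tb {n : ℕ} (b : Fin n → ℤ) : ℕ := ∑ i, (b i).natAbs

lemma adm_of_mem (t : ℕ) (b : Fin n → ℤ) (ht : tb b ≤ t) {r : ℕ} (f : (Fin r → ↥S) → k)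
    (hf : f ∈ CC k S (ng b) r) : adm t b f := by
  intro T hT i
  have h1 : (b i).natAbs ≤ tb b := Finset.single_le_sum (f := fun i => (b i).natAbs) (fun _ _ => by simp) (Finset.mem_univ i)
  simp only [uz, Pi.add_apply]
  by_cases h : b i < 0
  · have : ng b ⊆ un T := by
      by_contra h'
      exact hT (hf T h')
    have : i ∈ un T := this (by simp [ng, h])
    simp [this]
    omega
  · split_ifs <;> omega

lemma dcmp_finite (t : ℕ) {r : ℕ} (ψ : MM k S r →ₗ[MvPolynomial (Fin n) k] MvPolynomial (Fin n) k) :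
    {b | dcmp k S t b ψ ≠ 0}.Finite := by
  have : {b | dcmp k S t b ψ ≠ 0} ⊆ ⋃ T : Fin r → ↥S,
      (fun e : Fin n →₀ ℕ => (fun i => (e i : ℤ)) - uz t (un T)) '' 
        ((ψ (Finsupp.single T 1)).support : Set (Fin n →₀ ℕ)) := by
    intro b hb
    obtain ⟨T, hT⟩ := Function.ne_iff.1 hb
    rw [Set.mem_iUnion]
    refine ⟨T, ?_⟩
    simp only [dcmp, Pi.zero_apply] at hT
    rcases co_cases (b + uz t (un T)) with ⟨e, he⟩ | h
    · refine ⟨e, ?_, ?_⟩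
      · rw [he, co_cast] at hT
        simpa using hT
      · simp only [← he, add_sub_cancel_right]
    · exact absurd (co_neg h _) hT
  refine Set.Finite.subset (Set.finite_iUnion fun T => Set.Finite.image _ (Finset.finite_toSet _)) this

lemma dcmp_X (t : ℕ) (b : Fin n → ℤ) (i : Fin n) {r : ℕ} (ψ : MM k S r →ₗ[MvPolynomial (Fin n) k] MvPolynomial (Fin n) k) :
    dcmp k S t b ((X i : MvPolynomial (Fin n) k) • ψ) = dcmp k S t (b - Pi.single i 1) ψ := by
  funext T
  simp only [dcmp, LinearMap.smul_apply, smul_eq_mul, co_X]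
  congr 2
  abel

lemma dcmp_add (t : ℕ) (b : Fin n → ℤ) {r : ℕ} (ψ ψ' : MM k S r →ₗ[MvPolynomial (Fin n) k] MvPolynomial (Fin n) k) :
    dcmp k S t b (ψ + ψ') = dcmp k S t b ψ + dcmp k S t b ψ' := by
  funext T; simp [dcmp]

lemma dcmp_zero (t : ℕ) (b : Fin n → ℤ) {r : ℕ} :
    dcmp k S t b (0 : MM k S r →ₗ[MvPolynomial (Fin n) k] MvPolynomial (Fin n) k) = 0 := by
  funext T; simp [dcmp]

lemma dcmp_sum (t : ℕ) (b : Fin n → ℤ) {r : ℕ} {β : Type*} (B : Finset β)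
    (ψ : β → (MM k S r →ₗ[MvPolynomial (Fin n) k] MvPolynomial (Fin n) k)) :
    dcmp k S t b (∑ x ∈ B, ψ x) = ∑ x ∈ B, dcmp k S t b (ψ x) := by
  funext T; simp [dcmp]

lemma mkb_add (t : ℕ) (b : Fin n → ℤ) {r : ℕ} (f g : (Fin r → ↥S) → k) :
    mkb k S t b (f + g) = mkb k S t b f + mkb k S t b g := by
  refine Finsupp.lhom_ext' fun T => LinearMap.ext_ring ?_
  simp [mkb_single]

lemma mkb_smul (t : ℕ) (b : Fin n → ℤ) {r : ℕ} (c : k) (f : (Fin r → ↥S) → k) :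
    mkb k S t b (c • f) = (C c : MvPolynomial (Fin n) k) • mkb k S t b f := by
  refine Finsupp.lhom_ext' fun T => LinearMap.ext_ring ?_
  simp only [LinearMap.comp_apply, Finsupp.lsingle_apply, mkb_single, LinearMap.smul_apply, Pi.smul_apply, map_smul]
  rw [MvPolynomial.smul_eq_C_mul, smul_eq_mul]

variable (k S) in
/-- cocycle module of level `t` -/
noncomputable abbrev WZ (t r : ℕ) := LinearMap.ker (LinearMap.lcomp (MvPolynomial (Fin n) k) (MvPolynomial (Fin n) k)
        (wbd k S t r))

lemma mem_WZ (t : ℕ) {r : ℕ} (ψ : MM k S r →ₗ[MvPolynomial (Fin n) k] MvPolynomial (Fin n) k) :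
    ψ ∈ WZ k S t r ↔ ∀ b, cbd k S r (dcmp k S t b ψ) = 0 := by
  rw [LinearMap.mem_ker, LinearMap.lcomp_apply']
  constructor
  · intro h b
    rw [← dcmp_wbd, h, dcmp_zero]
  · intro h
    apply dcmp_ext t
    intro b
    rw [dcmp_wbd, h, dcmp_zero]

lemma mkb_mem (t : ℕ) (b : Fin n → ℤ) (ht : tb b ≤ t) {r : ℕ} (f : (Fin r → ↥S) → k)
    (hf : f ∈ CZ k S (ng b) r) : mkb k S t b f ∈ WZ k S t r := by
  rw [mem_WZ]
  intro b'
  by_cases h : b' = b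
  · subst h
    rw [dcmp_mkb_eq _ _ _ (adm_of_mem _ _ ht _ hf.1)]
    exact hf.2
  · rw [dcmp_mkb_ne _ h, map_zero]

lemma dcmp_mem (t : ℕ) (b : Fin n → ℤ) {r : ℕ} (ψ : MM k S r →ₗ[MvPolynomial (Fin n) k] MvPolynomial (Fin n) k)
    (h : ψ ∈ WZ k S t r) : dcmp k S t b ψ ∈ CZ k S (ng b) r :=
  ⟨adm_mem t b _ (dcmp_adm t b ψ), (mem_WZ t ψ).1 h b⟩

theorem lc_graded (I : Ideal (MvPolynomial (Fin n) k))
    (hI : I = Ideal.span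
      ((fun s : Finset (Fin n) => ∏ i ∈ s, MvPolynomial.X i) '' (S : Set (Finset (Fin n))))) (r : ℕ)
    [Module k (LC k I r)] [IsScalarTower k (MvPolynomial (Fin n) k) (LC k I r)] :
    ∃ g : (Fin n → ℤ) → Submodule k (LC k I r),
      DirectSum.IsInternal g ∧ GradingCompat k _ g ∧
      ∀ b, ∃ cl : CZ k S (ng b) r →ₗ[k] LC k I r, LinearMap.range cl = g b ∧
        LinearMap.ker cl = (CB k S (ng b) r).comap (CZ k S (ng b) r).subtype := by
  classical
  obtain ⟨mu, h1, h2, h3, h4⟩ := lc_taylor I hI r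
  let cl : ∀ b, CZ k S (ng b) r →ₗ[k] LC k I r := fun b =>
    { toFun := fun f => mu (tb b) ⟨mkb k S (tb b) b f.1, mkb_mem _ _ le_rfl _ f.2⟩
      map_add' := by
        intro f g
        rw [← map_add]
        congr 1
        exact Subtype.ext (mkb_add _ _ _ _)
      map_smul' := by
        intro c f
        rw [RingHom.id_apply, ← algebraMap_smul (MvPolynomial (Fin n) k) c (_ : LC k I r), ← (mu _).map_smul]
        exact congrArg (mu (tb b)) (Subtype.ext (mkb_smul _ _ _ _)) }
  have hcl : ∀ b f t (ht : tb b ≤ t), cl b f = mu t ⟨mkb k S t b f.1, mkb_mem _ _ ht _ f.2⟩ := by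
    intro b f t ht
    refine (h2 (tb b) t ht _ _ ?_).symm
    apply dcmp_ext t
    intro b'
    rw [dcmp_jm _ _ ht]
    by_cases h : b' = b
    · subst h
      rw [dcmp_mkb_eq _ _ _ (adm_of_mem _ _ ht _ f.2.1), dcmp_mkb_eq _ _ _ (adm_of_mem _ _ le_rfl _ f.2.1)]
    · rw [dcmp_mkb_ne _ h, dcmp_mkb_ne _ h]
  have lev : ∀ (t : ℕ) (B : Finset (Fin n → ℤ)), ∃ t', t ≤ t' ∧ ∀ b ∈ B, tb b ≤ t' := by
    intro t B
    refine ⟨t + B.sup tb, by omega, fun b hb => ?_⟩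
    have := Finset.le_sup (f := tb) hb
    omega
  have K1 : ∀ t (x : WZ k S t r), mu t x = ∑ b ∈ (dcmp_finite t x.1).toFinset, cl b ⟨dcmp k S t b x.1, dcmp_mem t b _ x.2⟩ := by
    intro t x
    obtain ⟨t', htt, ht'⟩ := lev t (dcmp_finite t x.1).toFinset
    have hx' : x.1 ∘ₗ jm k S (t' - t) r ∈ WZ k S t' r := by
      rw [mem_WZ]
      intro b
      rw [dcmp_jm _ _ htt]
      exact (mem_WZ t x.1).1 x.2 b
    rw [← h2 t t' htt x ⟨_, hx'⟩ rfl]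
    let y : ∀ b, WZ k S t' r := fun b => if hb : tb b ≤ t' then
      ⟨mkb k S t' b (dcmp k S t b x.1), mkb_mem _ _ hb _ (dcmp_mem t b _ x.2)⟩ else 0
    have e : ∀ b ∈ (dcmp_finite t x.1).toFinset, cl b ⟨dcmp k S t b x.1, dcmp_mem t b _ x.2⟩ = mu t' (y b) := by
      intro b hb
      rw [hcl b _ t' (ht' b hb)]
      simp only [y, dif_pos (ht' b hb)]
    rw [Finset.sum_congr rfl e, ← map_sum]
    congr 1
    apply Subtype.ext
    apply dcmp_ext t'
    intro b'
    rw [dcmp_jm _ _ htt, AddSubmonoidClass.coe_finsetSum, dcmp_sum]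
    by_cases hb' : b' ∈ (dcmp_finite t x.1).toFinset
    · rw [Finset.sum_eq_single b']
      · simp only [y, dif_pos (ht' b' hb')]
        rw [dcmp_mkb_eq]
        exact adm_of_mem _ _ (ht' b' hb') _ (dcmp_mem t b' _ x.2).1
      · intro b hb hne
        simp only [y, dif_pos (ht' b hb)]
        rw [dcmp_mkb_ne _ hne.symm]
      · intro h; exact absurd hb' h
    · rw [Finset.sum_eq_zero]
      · simpa using hb'
      · intro b hb
        have hne : b' ≠ b := by rintro rfl; exact hb' hb
        simp only [y, dif_pos (ht' b hb)]
        rw [dcmp_mkb_ne _ hne]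
  have K2 : ∀ (B : Finset (Fin n → ℤ)) (f : ∀ b, CZ k S (ng b) r), ∑ b ∈ B, cl b (f b) = 0 →
      ∀ b ∈ B, (f b).1 ∈ CB k S (ng b) r := by
    intro B f hs b hb
    obtain ⟨t, -, ht⟩ := lev 0 B
    let y : ∀ b, WZ k S t r := fun b => if hb : tb b ≤ t then
      ⟨mkb k S t b (f b).1, mkb_mem _ _ hb _ (f b).2⟩ else 0
    have e : ∀ b ∈ B, cl b (f b) = mu t (y b) := by
      intro b hb
      rw [hcl b _ t (ht b hb)]
      simp only [y, dif_pos (ht b hb)]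
    rw [Finset.sum_congr rfl e, ← map_sum] at hs
    obtain ⟨t', htt, hc⟩ := h3 _ _ hs
    have hf : (f b).1 = dcmp k S t b (∑ b ∈ B, y b : WZ k S t r).1 := by
      rw [AddSubmonoidClass.coe_finsetSum, dcmp_sum, Finset.sum_eq_single b]
      · simp only [y, dif_pos (ht b hb)]
        rw [dcmp_mkb_eq]
        exact adm_of_mem _ _ (ht b hb) _ (f b).2.1
      · intro b' hb' hne
        simp only [y, dif_pos (ht b' hb')]
        rw [dcmp_mkb_ne _ hne.symm]
      · intro h; exact absurd hb h
    rw [hf, ← dcmp_jm t t' htt]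
    generalize (∑ b ∈ B, y b : WZ k S t r).1 ∘ₗ jm k S (t' - t) r = Ψ at hc
    cases r with
    | zero =>
      have : Ψ = 0 := hc
      rw [this, dcmp_zero]
      exact Submodule.zero_mem _
    | succ r =>
      obtain ⟨w, rfl⟩ := hc
      rw [dcmp_wbd]
      exact ⟨_, adm_mem t' b _ (dcmp_adm t' b w), rfl⟩
  have K3 : ∀ b (f : CZ k S (ng b) r), f.1 ∈ CB k S (ng b) r → cl b f = 0 := by
    intro b f hf
    apply h4
    cases r with
    | zero =>
      have : f.1 = 0 := hf
      change mkb k S (tb b) b f.1 = 0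
      rw [this]
      refine Finsupp.lhom_ext' fun T => LinearMap.ext_ring ?_
      simp [mkb_single]
    | succ r =>
      obtain ⟨w, hw, hwf⟩ := hf
      refine ⟨mkb k S (tb b) b w, ?_⟩
      apply dcmp_ext (tb b)
      intro b'
      rw [dcmp_wbd]
      by_cases h : b' = b
      · subst h
        rw [dcmp_mkb_eq _ _ _ (adm_of_mem _ _ le_rfl _ hw)]
        change _ = dcmp k S (tb b') b' (mkb k S (tb b') b' f.1)
        rw [dcmp_mkb_eq _ _ _ (adm_of_mem _ _ le_rfl _ f.2.1), hwf]
      · rw [dcmp_mkb_ne _ h, map_zero]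
        change _ = dcmp k S (tb b) b' (mkb k S (tb b) b f.1)
        rw [dcmp_mkb_ne _ h]
  refine ⟨fun b => LinearMap.range (cl b), ?_, ?_, fun b => ⟨cl b, rfl, ?_⟩⟩
  · rw [DirectSum.isInternal_submodule_iff_iSupIndep_and_iSup_eq_top]
    constructor
    · rw [iSupIndep_iff_finsetSum_eq_zero_imp_eq_zero]
      intro B v hv hs b hb
      have hv' : ∀ b, ∃ f, b ∈ B → cl b f = v b := by
        intro b
        by_cases hb : b ∈ B
        · obtain ⟨f, hf⟩ := hv b hb
          exact ⟨f, fun _ => hf⟩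
        · exact ⟨0, fun h => absurd h hb⟩
      choose f hf using hv'
      rw [← hf b hb]
      apply K3
      refine K2 B f ?_ b hb
      rw [← hs]
      exact Finset.sum_congr rfl fun b hb => hf b hb
    · rw [eq_top_iff]
      rintro y -
      obtain ⟨t, x, rfl⟩ := h1 y
      rw [K1]
      exact Submodule.sum_mem _ fun b _ => Submodule.mem_iSup_of_mem b ⟨_, rfl⟩
  · rintro i b _ ⟨f, rfl⟩
    rw [hcl b f (tb b) le_rfl, ← map_smul, K1]
    refine Submodule.sum_mem _ fun b' _ => ?_
    by_cases h : b' = b + Pi.single i 1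
    · subst h
      exact ⟨_, rfl⟩
    · convert Submodule.zero_mem _
      convert map_zero (cl b')
      change dcmp k S (tb b) b' ((X i : MvPolynomial (Fin n) k) • mkb k S (tb b) b f.1) = 0
      rw [dcmp_X, dcmp_mkb_ne]
      rintro rfl
      exact h (by abel)
  · ext f
    constructor
    · intro hf
      have := K2 {b} (fun b' => if h : b' = b then h ▸ f else 0) (by simpa using hf) b (by simp)
      simpa using this
    · exact K3 b f
end PartG

section PartB0
universe u v
variable {k : Type} [Field k]

/-- subquotient -/
abbrev HQ {V : Type u} [AddCommGroup V] [Module k V] (Z B : Submodule k V) : Type u :=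
  ↥Z ⧸ B.comap Z.subtype

lemma zz {V : Type u} {W : Type v} [AddCommGroup V] [Module k V] [AddCommGroup W] [Module k W]
    (f : V →ₗ[k] W) (Z B : Submodule k V) (hk : ∀ x ∈ Z, f x = 0 → x ∈ B) (hB : B ≤ Z)
    (Z' B' : Submodule k W) (hZ' : Z.map f = Z') (hB' : B.map f = B') :
    Nonempty (HQ Z B ≃ₗ[k] HQ Z' B') := by
  subst hZ' hB'
  let g : Z →ₗ[k] HQ (Z.map f) (B.map f) :=
    Submodule.mkQ _ ∘ₗ (f.restrict (fun x hx => Submodule.mem_map_of_mem hx) : Z →ₗ[k] Z.map f)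
  have hg : Function.Surjective g := by
    refine (Submodule.mkQ_surjective _).comp ?_
    rintro ⟨_, x, hx, rfl⟩
    exact ⟨⟨x, hx⟩, rfl⟩
  have hker : LinearMap.ker g = B.comap Z.subtype := by
    ext x
    rw [LinearMap.mem_ker, LinearMap.comp_apply, Submodule.mkQ_apply, Submodule.Quotient.mk_eq_zero]
    constructor
    · rintro ⟨y, hy, hxy⟩
      have hxy' : f y = f x.1 := hxy
      have h := hk (x.1 - y) (Z.sub_mem x.2 (hB hy)) (by rw [map_sub, hxy', sub_self])
      have := B.add_mem h hy
      simpa using this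
    · intro hx
      exact ⟨x.1, hx, rfl⟩
  exact ⟨(Submodule.quotEquivOfEq _ _ hker.symm).trans (LinearMap.quotKerEquivOfSurjective g hg)⟩

lemma HQ_zero {V : Type u} [AddCommGroup V] [Module k V] (Z B : Submodule k V) (h : Z ≤ B) :
    Module.finrank k (HQ Z B) = 0 := by
  have : B.comap Z.subtype = ⊤ := by
    rw [eq_top_iff]; intro x _; exact h x.2
  have : Subsingleton (HQ Z B) := by
    rw [HQ, this]; infer_instance
  exact Module.finrank_zero_of_subsingleton

/-- Cohomological zigzag lemma. -/
theorem zig_coh (W : ℕ → Type u) [∀ p, AddCommGroup (W p)] [∀ p, Module k (W p)]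
    (dh : ∀ p, W p →ₗ[k] W (p+1)) (dv : ∀ p, W p →ₗ[k] W p) (D : ∀ p (q : ℕ), Submodule k (W p))
    (Dh : ∀ p q, ∀ x ∈ D p q, dh p x ∈ D (p+1) q) (Dv : ∀ p q, ∀ x ∈ D p q, dv p x ∈ D p (q+1))
    (comm : ∀ p q, ∀ x ∈ D p q, dh p (dv p x) = dv (p+1) (dh p x))
    (dh2 : ∀ p q, ∀ x ∈ D p q, dh (p+1) (dh p x) = 0) (dv2 : ∀ p q, ∀ x ∈ D p q, dv p (dv p x) = 0)
    (rowex : ∀ p q, ∀ x ∈ D (p+1) q, dh (p+1) x = 0 → ∃ y ∈ D p q, dh p y = x)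
    (colex : ∀ p q, ∀ x ∈ D p (q+1), dv p x = 0 → ∃ y ∈ D p q, dv p y = x) (p : ℕ) :
    Nonempty (HQ (D (p+1) 0 ⊓ LinearMap.ker (dh (p+1)) ⊓ LinearMap.ker (dv (p+1)))
        ((D p 0 ⊓ LinearMap.ker (dv p)).map (dh p)) ≃ₗ[k]
      HQ (D 0 (p+1) ⊓ LinearMap.ker (dh 0) ⊓ LinearMap.ker (dv 0))
        ((D 0 p ⊓ LinearMap.ker (dh 0)).map (dv 0))) := by
  have step : ∀ p q, Nonempty (HQ (D (p+1) q ⊓ LinearMap.ker (dh (p+1)) ⊓ LinearMap.ker (dv (p+1)))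
        ((D p q ⊓ LinearMap.ker (dv p)).map (dh p)) ≃ₗ[k]
      HQ (D p (q+1) ⊓ LinearMap.ker (dh p) ⊓ LinearMap.ker (dv p))
        ((D p q ⊓ LinearMap.ker (dh p)).map (dv p))) := by
    intro p q
    let Z := D p q ⊓ LinearMap.ker (dv (p+1) ∘ₗ dh p)
    let B := (D p q ⊓ LinearMap.ker (dh p)) ⊔ (D p q ⊓ LinearMap.ker (dv p))
    have hB : B ≤ Z := by
      apply sup_le
      · rintro x ⟨hx, hx2⟩
        refine ⟨hx, ?_⟩
        rw [SetLike.mem_coe, LinearMap.mem_ker] at hx2; rw [SetLike.mem_coe, LinearMap.mem_ker]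
        rw [LinearMap.comp_apply, hx2, map_zero]
      · rintro x ⟨hx, hx2⟩
        refine ⟨hx, ?_⟩
        rw [SetLike.mem_coe, LinearMap.mem_ker] at hx2; rw [SetLike.mem_coe, LinearMap.mem_ker]
        rw [LinearMap.comp_apply, ← comm p q x hx, hx2, map_zero]
    have hmh : (D p q ⊓ LinearMap.ker (dh p)).map (dh p) = ⊥ := by
      rw [eq_bot_iff]
      rintro _ ⟨x, ⟨_, hx⟩, rfl⟩
      exact hx
    have hmv : (D p q ⊓ LinearMap.ker (dv p)).map (dv p) = ⊥ := by
      rw [eq_bot_iff]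
      rintro _ ⟨x, ⟨_, hx⟩, rfl⟩
      exact hx
    obtain ⟨e1⟩ := zz (dh p) Z B (fun x hx h => Submodule.mem_sup_left ⟨hx.1, h⟩) hB
      (D (p+1) q ⊓ LinearMap.ker (dh (p+1)) ⊓ LinearMap.ker (dv (p+1)))
      ((D p q ⊓ LinearMap.ker (dv p)).map (dh p)) (by
        ext y
        constructor
        · rintro ⟨x, ⟨hx, hx2⟩, rfl⟩
          exact ⟨⟨Dh p q x hx, dh2 p q x hx⟩, hx2⟩
        · rintro ⟨⟨hy, hy2⟩, hy3⟩
          obtain ⟨x, hx, rfl⟩ := rowex p q y hy hy2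
          exact ⟨x, ⟨hx, hy3⟩, rfl⟩) (by rw [Submodule.map_sup, hmh, bot_sup_eq])
    obtain ⟨e2⟩ := zz (dv p) Z B (fun x hx h => Submodule.mem_sup_right ⟨hx.1, h⟩) hB
      (D p (q+1) ⊓ LinearMap.ker (dh p) ⊓ LinearMap.ker (dv p))
        ((D p q ⊓ LinearMap.ker (dh p)).map (dv p)) (by
        ext y
        constructor
        · rintro ⟨x, ⟨hx, hx2⟩, rfl⟩
          refine ⟨⟨Dv p q x hx, ?_⟩, dv2 p q x hx⟩
          exact (comm p q x hx).trans hx2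
        · rintro ⟨⟨hy, hy2⟩, hy3⟩
          obtain ⟨x, hx, rfl⟩ := colex p q y hy hy3
          exact ⟨x, ⟨hx, (comm p q x hx).symm.trans hy2⟩, rfl⟩) (by rw [Submodule.map_sup, hmv, sup_bot_eq])
    exact ⟨e1.symm.trans e2⟩
  have eqB : ∀ p q, (D (p+1) q ⊓ LinearMap.ker (dh (p+1))).map (dv (p+1)) =
      (D p (q+1) ⊓ LinearMap.ker (dv p)).map (dh p) := by
    intro p q
    ext z
    constructor
    · rintro ⟨x, ⟨hx, hx2⟩, rfl⟩
      obtain ⟨y, hy, rfl⟩ := rowex p q x hx hx2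
      exact ⟨dv p y, ⟨Dv p q y hy, dv2 p q y hy⟩, comm p q y hy⟩
    · rintro ⟨x, ⟨hx, hx2⟩, rfl⟩
      obtain ⟨y, hy, rfl⟩ := colex p q x hx hx2
      exact ⟨dh p y, ⟨Dh p q y hy, dh2 p q y hy⟩, (comm p q y hy).symm⟩
  have main : ∀ p q r, p + q = r → 
      Nonempty (HQ (D (p+1) q ⊓ LinearMap.ker (dh (p+1)) ⊓ LinearMap.ker (dv (p+1)))
        ((D p q ⊓ LinearMap.ker (dv p)).map (dh p)) ≃ₗ[k]
      HQ (D 0 (r+1) ⊓ LinearMap.ker (dh 0) ⊓ LinearMap.ker (dv 0))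
        ((D 0 r ⊓ LinearMap.ker (dh 0)).map (dv 0))) := by
    intro p
    induction p with
    | zero =>
      intro q r h
      have : q = r := by omega
      subst this
      exact step 0 q
    | succ p ih =>
      intro q r h
      obtain ⟨e1⟩ := step (p+1) q
      obtain ⟨e2⟩ := ih (q+1) r (by omega)
      rw [eqB] at e1
      exact ⟨e1.trans e2⟩
  exact main p 0 p rfl

/-- cycles in degree `p` -/
def kh {W : ℕ → Type u} [∀ p, AddCommGroup (W p)] [∀ p, Module k (W p)]
    (dh : ∀ p, W (p+1) →ₗ[k] W p) : ∀ p, Submodule k (W p)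
  | 0 => ⊤
  | (p+1) => LinearMap.ker (dh p)

/-- Homological zigzag lemma. -/
theorem zig_hom (W : ℕ → Type u) [∀ p, AddCommGroup (W p)] [∀ p, Module k (W p)]
    (dh : ∀ p, W (p+1) →ₗ[k] W p) (dv : ∀ p, W p →ₗ[k] W p) (D : ∀ p (q : ℕ), Submodule k (W p))
    (Dh : ∀ p q, ∀ x ∈ D (p+1) q, dh p x ∈ D p q) (Dv : ∀ p q, ∀ x ∈ D p (q+1), dv p x ∈ D p q)
    (Dv0 : ∀ p, ∀ x ∈ D p 0, dv p x = 0)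
    (comm : ∀ p q, ∀ x ∈ D (p+1) q, dh p (dv (p+1) x) = dv p (dh p x))
    (dh2 : ∀ p q, ∀ x ∈ D (p+2) q, dh p (dh (p+1) x) = 0) (dv2 : ∀ p q, ∀ x ∈ D p q, dv p (dv p x) = 0)
    (rowex : ∀ p q, ∀ x ∈ D p (q+1), x ∈ kh dh p → ∃ y ∈ D (p+1) (q+1), dh p y = x)
    (colex : ∀ p q, ∀ x ∈ D (p+1) q, dv (p+1) x = 0 → ∃ y ∈ D (p+1) (q+1), dv (p+1) y = x) (r : ℕ) :
    Nonempty (HQ (D r 0 ⊓ kh dh r) ((D (r+1) 0).map (dh r)) ≃ₗ[k]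
      HQ (D 0 r ⊓ LinearMap.ker (dv 0)) ((D 0 (r+1)).map (dv 0))) := by
  have hkh : ∀ p q, ∀ x ∈ D (p+1) q, dh p x ∈ kh dh p := by
    intro p q x hx
    cases p with
    | zero => trivial
    | succ p => exact dh2 p q x hx
  let BB : ∀ p q : ℕ, Submodule k (W p) := fun p q => (D (p+1) (q+1)).map (dv p ∘ₗ dh p)
  have step : ∀ p q, Nonempty (HQ (D (p+1) q ⊓ LinearMap.ker (dv (p+1)) ⊓ kh dh (p+1)) (BB (p+1) q) ≃ₗ[k]
      HQ (D p (q+1) ⊓ LinearMap.ker (dv p) ⊓ kh dh p) (BB p (q+1))) := by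
    intro p q
    let Z := D (p+1) (q+1) ⊓ LinearMap.ker (dv p ∘ₗ dh p)
    let B := (D (p+1) (q+1) ⊓ LinearMap.ker (dh p)) ⊔ (D (p+1) (q+1) ⊓ LinearMap.ker (dv (p+1)))
    have hB : B ≤ Z := by
      apply sup_le
      · rintro x ⟨hx, hx2⟩
        refine ⟨hx, ?_⟩
        rw [SetLike.mem_coe, LinearMap.mem_ker] at hx2; rw [SetLike.mem_coe, LinearMap.mem_ker]
        rw [LinearMap.comp_apply, hx2, map_zero]
      · rintro x ⟨hx, hx2⟩
        refine ⟨hx, ?_⟩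
        rw [SetLike.mem_coe, LinearMap.mem_ker] at hx2; rw [SetLike.mem_coe, LinearMap.mem_ker]
        rw [LinearMap.comp_apply, ← comm p _ x hx, hx2, map_zero]
    have hmh : (D (p+1) (q+1) ⊓ LinearMap.ker (dh p)).map (dh p) = ⊥ := by
      rw [eq_bot_iff]
      rintro _ ⟨x, ⟨_, hx⟩, rfl⟩
      exact hx
    have hmv : (D (p+1) (q+1) ⊓ LinearMap.ker (dv (p+1))).map (dv (p+1)) = ⊥ := by
      rw [eq_bot_iff]
      rintro _ ⟨x, ⟨_, hx⟩, rfl⟩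
      exact hx
    obtain ⟨e1⟩ := zz (dv (p+1)) Z B (fun x hx h => Submodule.mem_sup_right ⟨hx.1, h⟩) hB
      (D (p+1) q ⊓ LinearMap.ker (dv (p+1)) ⊓ kh dh (p+1)) (BB (p+1) q) (by
        ext y
        constructor
        · rintro ⟨x, ⟨hx, hx2⟩, rfl⟩
          exact ⟨⟨Dv _ q x hx, dv2 _ _ x hx⟩, (comm p _ x hx).trans hx2⟩
        · rintro ⟨⟨hy, hy2⟩, hy3⟩
          obtain ⟨x, hx, rfl⟩ := colex p q y hy hy2
          exact ⟨x, ⟨hx, (comm p _ x hx).symm.trans hy3⟩, rfl⟩) (by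
        rw [Submodule.map_sup, hmv, sup_bot_eq]
        ext z
        constructor
        · rintro ⟨x, ⟨hx, hx2⟩, rfl⟩
          obtain ⟨y, hy, rfl⟩ := rowex (p+1) q x hx hx2
          exact ⟨y, hy, rfl⟩
        · rintro ⟨y, hy, rfl⟩
          exact ⟨dh (p+1) y, ⟨Dh _ _ y hy, dh2 _ _ y hy⟩, rfl⟩)
    obtain ⟨e2⟩ := zz (dh p) Z B (fun x hx h => Submodule.mem_sup_left ⟨hx.1, h⟩) hB
      (D p (q+1) ⊓ LinearMap.ker (dv p) ⊓ kh dh p) (BB p (q+1)) (by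
        ext y
        constructor
        · rintro ⟨x, ⟨hx, hx2⟩, rfl⟩
          exact ⟨⟨Dh _ _ x hx, hx2⟩, hkh _ _ x hx⟩
        · rintro ⟨⟨hy, hy2⟩, hy3⟩
          obtain ⟨x, hx, rfl⟩ := rowex p q y hy hy3
          exact ⟨x, ⟨hx, hy2⟩, rfl⟩) (by
        rw [Submodule.map_sup, hmh, bot_sup_eq]
        ext z
        constructor
        · rintro ⟨x, ⟨hx, hx2⟩, rfl⟩
          obtain ⟨y, hy, rfl⟩ := colex p _ x hx hx2
          exact ⟨y, hy, (comm _ _ y hy).symm⟩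
        · rintro ⟨y, hy, rfl⟩
          exact ⟨dv (p+1) y, ⟨Dv _ _ y hy, dv2 _ _ y hy⟩, comm _ _ y hy⟩)
    exact ⟨e1.symm.trans e2⟩
  have main : ∀ p q r, p + q = r → 
      Nonempty (HQ (D p q ⊓ LinearMap.ker (dv p) ⊓ kh dh p) (BB p q) ≃ₗ[k]
      HQ (D 0 r ⊓ LinearMap.ker (dv 0) ⊓ kh dh 0) (BB 0 r)) := by
    intro p
    induction p with
    | zero =>
      intro q r h
      have : q = r := by omega
      subst this
      exact ⟨LinearEquiv.refl _ _⟩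
    | succ p ih =>
      intro q r h
      obtain ⟨e1⟩ := step p q
      obtain ⟨e2⟩ := ih (q+1) r (by omega)
      exact ⟨e1.trans e2⟩
  have e := main r 0 r rfl
  have a1 : D r 0 ⊓ LinearMap.ker (dv r) ⊓ kh dh r = D r 0 ⊓ kh dh r := by
    congr 1
    rw [inf_eq_left]
    exact fun x hx => Dv0 r x hx
  have a2 : BB r 0 = (D (r+1) 0).map (dh r) := by
    ext z
    constructor
    · rintro ⟨y, hy, rfl⟩
      exact ⟨dv (r+1) y, Dv _ _ y hy, comm _ _ y hy⟩
    · rintro ⟨x, hx, rfl⟩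
      obtain ⟨y, hy, rfl⟩ := colex r 0 x hx (Dv0 _ x hx)
      exact ⟨y, hy, (comm _ _ y hy).symm⟩
  have a3 : D 0 r ⊓ LinearMap.ker (dv 0) ⊓ kh dh 0 = D 0 r ⊓ LinearMap.ker (dv 0) := inf_top_eq _
  have a4 : BB 0 r = (D 0 (r+1)).map (dv 0) := by
    ext z
    constructor
    · rintro ⟨y, hy, rfl⟩
      exact ⟨dh 0 y, Dh _ _ y hy, rfl⟩
    · rintro ⟨x, hx, rfl⟩
      obtain ⟨y, hy, rfl⟩ := rowex 0 r x hx trivial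
      exact ⟨y, hy, rfl⟩
  rw [a1, a2, a3, a4] at e
  exact e
end PartB0

section PartC
variable {n : ℕ} {k : Type} [Field k]

variable (k) in
/-- sign -/
def eps (v : Fin n) (G : Finset (Fin n)) : k := (-1)^((G.filter (· < v)).card)

lemma eps_sq (v : Fin n) (G : Finset (Fin n)) : eps k v G * eps k v G = 1 := by
  rw [eps, ← mul_pow]; simp

lemma eps_erase_not_lt (v w : Fin n) (G : Finset (Fin n)) (h : ¬ w < v) :
    eps k v (G.erase w) = eps k v G := by
  rw [eps, eps, Finset.filter_erase, Finset.erase_eq_of_notMem]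
  simp [h]

lemma eps_erase_lt (v w : Fin n) (G : Finset (Fin n)) (hw : w ∈ G) (h : w < v) :
    eps k v (G.erase w) = - eps k v G := by
  have : w ∈ G.filter (· < v) := by simp [hw, h]
  rw [eps, eps, Finset.filter_erase, ← Finset.card_erase_add_one this, pow_succ]
  ring

lemma eps_insert_self (v : Fin n) (G : Finset (Fin n)) : eps k v (insert v G) = eps k v G := by
  rw [eps, eps, Finset.filter_insert]; simp

lemma eps_anti (v w : Fin n) (G : Finset (Fin n)) (hv : v ∈ G) (hw : w ∈ G) (h : v ≠ w) :
    eps k v G * eps k w (G.erase v) = - (eps k w G * eps k v (G.erase w)) := by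
  rcases lt_or_gt_of_ne h with h | h
  · rw [eps_erase_lt w v G hv h, eps_erase_not_lt v w G (not_lt_of_gt h)]; ring
  · rw [eps_erase_not_lt w v G (not_lt_of_gt h), eps_erase_lt v w G hw h]; ring

variable (k) in
/-- coboundary on functions on subsets -/
def del (F : Finset (Fin n)) : (Finset (Fin n) → k) →ₗ[k] (Finset (Fin n) → k) where
  toFun φ := fun G => if G ⊆ F then ∑ v ∈ G, eps k v G * φ (G.erase v) else 0
  map_add' f g := by
    funext G
    simp only [Pi.add_apply]
    split_ifs
    · simp [mul_add, Finset.sum_add_distrib]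
    · simp
  map_smul' c f := by
    funext G
    simp only [Pi.smul_apply, smul_eq_mul, RingHom.id_apply]
    split_ifs
    · rw [Finset.mul_sum]
      exact Finset.sum_congr rfl fun i _ => by ring
    · simp

lemma del_apply (F : Finset (Fin n)) (φ : Finset (Fin n) → k) (G) (h : G ⊆ F) :
    del k F φ G = ∑ v ∈ G, eps k v G * φ (G.erase v) := if_pos h

lemma del_apply_not (F : Finset (Fin n)) (φ : Finset (Fin n) → k) (G) (h : ¬ G ⊆ F) :
    del k F φ G = 0 := if_neg h

lemma del_del (F : Finset (Fin n)) (φ : Finset (Fin n) → k) : del k F (del k F φ) = 0 := by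
  funext G
  by_cases h : G ⊆ F
  · rw [del_apply _ _ _ h]
    have : ∀ v ∈ G, eps k v G * del k F φ (G.erase v) =
        ∑ w ∈ G.erase v, eps k v G * (eps k w (G.erase v) * φ ((G.erase v).erase w)) := by
      intro v _
      rw [del_apply _ _ _ ((Finset.erase_subset _ _).trans h), Finset.mul_sum]
    rw [Finset.sum_congr rfl this, Finset.sum_sigma']
    refine Finset.sum_involution (fun a _ => ⟨a.2, a.1⟩) ?_ ?_ ?_ ?_
    · rintro ⟨v, w⟩ hvw
      simp only [Finset.mem_sigma, Finset.mem_erase] at hvw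
      simp only
      rw [← mul_assoc, ← mul_assoc, eps_anti v w G hvw.1 hvw.2.2 hvw.2.1.symm, Finset.erase_right_comm]
      ring
    · rintro ⟨v, w⟩ hvw _ heq
      simp only [Finset.mem_sigma, Finset.mem_erase] at hvw
      simp only [Sigma.mk.injEq] at heq
      exact hvw.2.1 heq.1
    · rintro ⟨v, w⟩ hvw
      simp only [Finset.mem_sigma, Finset.mem_erase] at hvw ⊢
      exact ⟨hvw.2.2, hvw.2.1.symm, hvw.1⟩
    · rintro ⟨v, w⟩ _
      rfl
  · exact del_apply_not _ _ _ h

/-- toggle contraction -/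
def tog (v : Fin n) (x : Finset (Fin n) → k) : Finset (Fin n) → k :=
  fun G => if v ∉ G then eps k v G * x (insert v G) else 0

lemma tog_mem (v : Fin n) (x : Finset (Fin n) → k) (G) (h : v ∈ G) : tog v x G = 0 := by simp [tog, h]
lemma tog_not (v : Fin n) (x : Finset (Fin n) → k) (G) (h : v ∉ G) :
    tog v x G = eps k v G * x (insert v G) := by simp [tog, h]

lemma tog_del (F : Finset (Fin n)) (v : Fin n) (hv : v ∈ F) (x : Finset (Fin n) → k)
    (hx : ∀ G, x G ≠ 0 → G ⊆ F) : del k F (tog v x) + tog v (del k F x) = x := by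
  funext G
  rw [Pi.add_apply]
  by_cases hG : G ⊆ F
  · by_cases hvG : v ∈ G
    · rw [tog_mem v _ G hvG, add_zero, del_apply _ _ _ hG, Finset.sum_eq_single v]
      · rw [tog_not _ _ _ (by simp), Finset.insert_erase hvG, ← mul_assoc,
          eps_erase_not_lt _ _ _ (lt_irrefl _), eps_sq, one_mul]
      · intro w _ hwv
        rw [tog_mem _ _ _ (by simp [hvG, hwv.symm]), mul_zero]
      · exact fun h => absurd hvG h
    · rw [tog_not _ _ _ hvG, del_apply _ _ _ hG, del_apply _ _ _ (Finset.insert_subset hv hG),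
        Finset.sum_insert hvG, mul_add, Finset.erase_insert hvG, eps_insert_self, ← mul_assoc, eps_sq,
        one_mul, add_left_comm, Finset.mul_sum, ← Finset.sum_add_distrib, Finset.sum_eq_zero, add_zero]
      intro w hw
      have hwv : v ≠ w := fun h => hvG (h ▸ hw)
      rw [tog_not _ _ _ (by simp [hvG]), Finset.erase_insert_of_ne hwv, ← mul_assoc, ← mul_assoc, ← add_mul]
      have := eps_anti (k := k) v w (insert v G) (by simp) (by simp [hw]) hwv
      rw [Finset.erase_insert hvG, Finset.erase_insert_of_ne hwv, eps_insert_self, eps_insert_self] at this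
      have h2 : eps k w G * eps k v (G.erase w) + eps k v G * eps k w (insert v G) = 0 := by
        linear_combination (eps k w G * eps k w (insert v G)) * this -
          eps k v (G.erase w) * eps k w G * eps_sq (k := k) w (insert v G)  - eps k v G * eps k w (insert v G) * eps_sq (k := k) w G + 2 * 0
      rw [h2, zero_mul]
  · have : x G = 0 := by by_contra h; exact hG (hx G h)
    rw [this, del_apply_not _ _ _ hG, zero_add]
    by_cases hvG : v ∈ G
    · rw [tog_mem v _ G hvG]
    · rw [tog_not _ _ _ hvG, del_apply_not, mul_zero]
      exact fun h => hG ((Finset.subset_insert _ _).trans h)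

/-- simplicial differential -/
def sd (k : Type) [Field k] {X V : Type*} [AddCommGroup V] [Module k V] {r : ℕ} (g : (Fin r → X) → V) :
    (Fin (r+1) → X) → V := fun τ => ∑ i : Fin (r+1), (-1:k)^(i:ℕ) • g (τ ∘ i.succAbove)

lemma sd_cons {X V : Type*} [AddCommGroup V] [Module k V] {r : ℕ} (g : (Fin (r+1) → X) → V) (s : X)
    (τ : Fin (r+1) → X) :
    sd k g (Fin.cons s τ : Fin (r+2) → X) = g τ - sd k (fun σ => g (Fin.cons s σ : Fin (r+1) → X)) τ := by
  rw [sd, Fin.sum_univ_succ, sd, cons_face_zero, sub_eq_add_neg, ← Finset.sum_neg_distrib]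
  congr 1
  · simp
  · refine Finset.sum_congr rfl fun i _ => ?_
    rw [cons_face, ← neg_smul]
    congr 1
    simp [pow_succ]

lemma sd_cons0 {X V : Type*} [AddCommGroup V] [Module k V] (g : (Fin 0 → X) → V)
    (τ : Fin 1 → X) (τ0 : Fin 0 → X) :
    sd k g τ = g τ0 := by
  rw [sd, Fin.sum_univ_one, Subsingleton.elim (τ ∘ _) τ0]; simp

lemma sd_sd {X V : Type*} [AddCommGroup V] [Module k V] {r : ℕ} (g : (Fin r → X) → V) 
    (τ : Fin (r+2) → X) : sd k (sd k g) τ = 0 := by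
  induction r with
  | zero =>
    rw [← Fin.cons_self_tail τ, sd_cons, sd_cons0 _ _ (fun i => i.elim0)]
    rw [sd_cons0 _ _ (fun i => i.elim0), sd_cons0 g _ (fun i => i.elim0), sub_self]
  | succ r ih =>
    rw [← Fin.cons_self_tail τ, sd_cons]
    have : (fun σ => sd k g (Fin.cons (τ 0) σ : Fin (r+2) → X)) =
        fun σ => g σ - sd k (fun σ' => g (Fin.cons (τ 0) σ' : Fin (r+1) → X)) σ := by
      funext σ; exact sd_cons g _ _
    rw [this]
    have h2 := ih (fun σ' => g (Fin.cons (τ 0) σ' : Fin (r+1) → X)) (Fin.tail τ)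
    rw [sd] at h2
    simp only [sd, smul_sub, Finset.sum_sub_distrib] at h2 ⊢
    rw [h2]; simp
end PartC

section PartD
variable {n : ℕ} {k : Type} [Field k] {S : Finset (Finset (Fin n))}

/-- `G` meets every element of `S` -/
def cov (S : Finset (Finset (Fin n))) (G : Finset (Fin n)) : Prop := ∀ s ∈ S, ¬ Disjoint s G

variable (k S) in
/-- cochains on covers inside `F` -/
def MC (F : Finset (Fin n)) (r : ℕ) : Submodule k (Finset (Fin n) → k) where
  carrier := {φ | ∀ G, φ G ≠ 0 → G ⊆ F ∧ cov S G ∧ G.card = r}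
  zero_mem' := fun _ h => absurd rfl h
  add_mem' := fun {a b} ha hb G h => by
    by_cases h1 : a G = 0
    · exact hb G (fun h2 => h (by simp [h1, h2]))
    · exact ha G h1
  smul_mem' := fun c f hf G h => hf G (fun h2 => h (by simp [h2]))

variable (k S) in
/-- cocycles -/
def MZ (F : Finset (Fin n)) (r : ℕ) : Submodule k (Finset (Fin n) → k) :=
  MC k S F r ⊓ LinearMap.ker (del k F)

variable (k S) in
/-- coboundaries -/
def MB (F : Finset (Fin n)) : ∀ _ : ℕ, Submodule k (Finset (Fin n) → k)
  | 0 => ⊥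
  | (r+1) => (MC k S F r).map (del k F)

variable (k S) in
/-- double complex, horizontal -/
def bdh (F : Finset (Fin n)) (p : ℕ) : ((Fin p → ↥S) → Finset (Fin n) → k) →ₗ[k]
    ((Fin (p+1) → ↥S) → Finset (Fin n) → k) where
  toFun f := fun T G => open Classical in if G ⊆ F \ un T then sd k (fun T' => f T' G) T else 0
  map_add' f g := by
    funext T G
    simp only [Pi.add_apply, sd]
    split_ifs
    · simp [mul_add, Finset.sum_add_distrib]
    · simp
  map_smul' c f := by
    funext T G
    simp only [Pi.smul_apply, smul_eq_mul, RingHom.id_apply, sd]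
    split_ifs
    · rw [Finset.mul_sum]
      exact Finset.sum_congr rfl fun i _ => by ring
    · simp

lemma bdh_apply (F : Finset (Fin n)) (p : ℕ) (f : (Fin p → ↥S) → Finset (Fin n) → k) (T) (G)
    (h : G ⊆ F \ un T) : bdh k S F p f T G = sd k (fun T' => f T' G) T := if_pos h
lemma bdh_apply_not (F : Finset (Fin n)) (p : ℕ) (f : (Fin p → ↥S) → Finset (Fin n) → k) (T) (G)
    (h : ¬ G ⊆ F \ un T) : bdh k S F p f T G = 0 := if_neg h

variable (k S) in
/-- double complex, vertical -/
def bdv (F : Finset (Fin n)) (p : ℕ) : ((Fin p → ↥S) → Finset (Fin n) → k) →ₗ[k]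
    ((Fin p → ↥S) → Finset (Fin n) → k) where
  toFun f := fun T => del k (F \ un T) (f T)
  map_add' f g := by funext T; simp
  map_smul' c f := by funext T; simp

lemma bdv_apply (F : Finset (Fin n)) (p : ℕ) (f : (Fin p → ↥S) → Finset (Fin n) → k) (T) :
  bdv k S F p f T = del k (F \ un T) (f T) := rfl

variable (k S) in
/-- double complex, pieces -/
def BD (F : Finset (Fin n)) (p q : ℕ) : Submodule k ((Fin p → ↥S) → Finset (Fin n) → k) where
  carrier := {f | ∀ T G, f T G ≠ 0 → G ⊆ F \ un T ∧ G.card = q}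
  zero_mem' := fun _ _ h => absurd rfl h
  add_mem' := fun {a b} ha hb T G h => by
    by_cases h1 : a T G = 0
    · exact hb T G (fun h2 => h (by simp [h1, h2]))
    · exact ha T G h1
  smul_mem' := fun c f hf T G h => hf T G (fun h2 => h (by simp [h2]))

lemma sdiff_face (F : Finset (Fin n)) {p : ℕ} (T : Fin (p+1) → ↥S) (i : Fin (p+1)) :
    F \ un T ⊆ F \ un (T ∘ i.succAbove) := Finset.sdiff_subset_sdiff subset_rfl (un_face T i)

lemma BD_h (F : Finset (Fin n)) (p q : ℕ) (x) (hx : x ∈ BD k S F p q) : bdh k S F p x ∈ BD k S F (p+1) q := by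
  intro T G h
  by_cases hG : G ⊆ F \ un T
  · refine ⟨hG, ?_⟩
    rw [bdh_apply _ _ _ _ _ hG] at h
    obtain ⟨i, _, hi⟩ := Finset.exists_ne_zero_of_sum_ne_zero h
    exact (hx _ _ (right_ne_zero_of_smul hi)).2
  · exact absurd (bdh_apply_not _ _ _ _ _ hG) h

lemma BD_v (F : Finset (Fin n)) (p q : ℕ) (x) (hx : x ∈ BD k S F p q) : bdv k S F p x ∈ BD k S F p (q+1) := by
  intro T G h
  rw [bdv_apply] at h
  by_cases hG : G ⊆ F \ un T
  · refine ⟨hG, ?_⟩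
    rw [del_apply _ _ _ hG] at h
    obtain ⟨i, hi1, hi⟩ := Finset.exists_ne_zero_of_sum_ne_zero h
    have := (hx _ _ (right_ne_zero_of_mul hi)).2
    rw [← this, Finset.card_erase_add_one hi1]
  · exact absurd (del_apply_not _ _ _ hG) h

lemma BD_comm (F : Finset (Fin n)) (p : ℕ) (x) :
    bdh k S F p (bdv k S F p x) = bdv k S F (p+1) (bdh k S F p x) := by
  funext T G
  rw [bdv_apply]
  by_cases hG : G ⊆ F \ un T
  · rw [bdh_apply _ _ _ _ _ hG, del_apply _ _ _ hG, sd]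
    have h1 : ∀ i : Fin (p+1), (-1:k)^(i:ℕ) • bdv k S F p x (T ∘ i.succAbove) G =
        ∑ v ∈ G, (-1:k)^(i:ℕ) * (eps k v G * x (T ∘ i.succAbove) (G.erase v)) := by
      intro i
      rw [bdv_apply, del_apply _ _ _ (hG.trans (sdiff_face F T i)), smul_eq_mul, Finset.mul_sum]
    simp only [h1]
    rw [Finset.sum_comm]
    refine Finset.sum_congr rfl fun v _ => ?_
    rw [bdh_apply _ _ _ _ _ ((Finset.erase_subset _ _).trans hG), sd, Finset.mul_sum]
    refine Finset.sum_congr rfl fun i _ => ?_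
    rw [smul_eq_mul]; ring
  · rw [bdh_apply_not _ _ _ _ _ hG, del_apply_not _ _ _ hG]

lemma BD_h2 (F : Finset (Fin n)) (p : ℕ) (x) : bdh k S F (p+1) (bdh k S F p x) = 0 := by
  funext T G
  by_cases hG : G ⊆ F \ un T
  · rw [bdh_apply _ _ _ _ _ hG]
    have := sd_sd (k := k) (fun T' => x T' G) T
    refine Eq.trans ?_ this
    rw [sd, sd]
    refine Finset.sum_congr rfl fun i _ => ?_
    rw [bdh_apply _ _ _ _ _ (hG.trans (sdiff_face F T i))]
  · rw [bdh_apply_not _ _ _ _ _ hG]; rfl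

lemma BD_v2 (F : Finset (Fin n)) (p : ℕ) (x) : bdv k S F p (bdv k S F p x) = 0 := by
  funext T
  rw [bdv_apply, bdv_apply, del_del]; rfl

lemma BD_row (F : Finset (Fin n)) (p q : ℕ) (x) (hx : x ∈ BD k S F (p+1) q) (h0 : bdh k S F (p+1) x = 0) :
    ∃ y ∈ BD k S F p q, bdh k S F p y = x := by
  classical
  let y : (Fin p → ↥S) → Finset (Fin n) → k := fun T G =>
    if h : ∃ s : ↥S, Disjoint s.1 G then (if G ⊆ F \ un T then x (Fin.cons h.choose T : Fin (p+1) → ↥S) G else 0) else 0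
  refine ⟨y, ?_, ?_⟩
  · intro T G h
    by_cases h1 : ∃ s : ↥S, Disjoint s.1 G
    · by_cases h2 : G ⊆ F \ un T
      · refine ⟨h2, ?_⟩
        simp only [y, dif_pos h1, if_pos h2] at h
        exact (hx _ _ h).2
      · exact absurd (by simp only [y, dif_pos h1, if_neg h2]) h
    · exact absurd (by simp only [y, dif_neg h1]) h
  · funext T G
    by_cases hG : G ⊆ F \ un T
    · have h1 : ∃ s : ↥S, Disjoint s.1 G := by
        refine ⟨T 0, Finset.disjoint_left.2 fun j hj hjG => ?_⟩
        exact (Finset.mem_sdiff.1 (hG hjG)).2 ((mem_un T j).2 ⟨0, hj⟩)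
      have h2 := congrFun (congrFun h0 (Fin.cons h1.choose T : Fin (p+2) → ↥S)) G
      rw [bdh_apply, sd_cons] at h2
      · have h3 := (sub_eq_zero.1 h2).symm
        refine Eq.trans ?_ h3
        rw [bdh_apply _ _ _ _ _ hG]
        rw [sd, sd]
        refine Finset.sum_congr rfl fun i _ => ?_
        simp only [y, dif_pos h1, if_pos (hG.trans (sdiff_face F T i))]
      · rw [un_cons]
        intro j hj
        have := Finset.mem_sdiff.1 (hG hj)
        refine Finset.mem_sdiff.2 ⟨this.1, fun h => ?_⟩
        rcases Finset.mem_union.1 h with h | h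
        · exact Finset.disjoint_left.1 h1.choose_spec h hj
        · exact this.2 h
    · rw [bdh_apply_not _ _ _ _ _ hG]
      by_contra h
      exact hG (hx T G (Ne.symm h)).1

lemma BD_col (F : Finset (Fin n)) (p q : ℕ) (x) (hx : x ∈ BD k S F p (q+1)) (h0 : bdv k S F p x = 0) :
    ∃ y ∈ BD k S F p q, bdv k S F p y = x := by
  classical
  let y : (Fin p → ↥S) → Finset (Fin n) → k := fun T =>
    if h : (F \ un T).Nonempty then tog h.choose (x T) else 0
  refine ⟨y, ?_, ?_⟩
  · intro T G h
    by_cases h1 : (F \ un T).Nonempty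
    · simp only [y, dif_pos h1] at h
      by_cases h2 : h1.choose ∈ G
      · exact absurd (tog_mem _ _ _ h2) h
      · rw [tog_not _ _ _ h2] at h
        have := hx _ _ (right_ne_zero_of_mul h)
        rw [Finset.card_insert_of_notMem h2] at this
        exact ⟨(Finset.subset_insert _ _).trans this.1, by omega⟩
    · simp only [y, dif_neg h1] at h
      exact absurd rfl h
  · funext T
    rw [bdv_apply]
    by_cases h1 : (F \ un T).Nonempty
    · simp only [y, dif_pos h1]
      have h2 := tog_del (k := k) (F \ un T) h1.choose h1.choose_spec (x T) (fun G h => (hx T G h).1)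
      have h3 : del k (F \ un T) (x T) = 0 := congrFun h0 T
      rw [h3] at h2
      have h4 : tog h1.choose (0 : Finset (Fin n) → k) = 0 := by funext G; simp [tog]
      rw [h4, add_zero] at h2
      exact h2
    · simp only [y, dif_neg h1, map_zero]
      funext G
      by_contra h
      have := hx T G (Ne.symm h)
      rw [Finset.not_nonempty_iff_eq_empty.1 h1, Finset.subset_empty] at this
      rw [this.1] at this
      simp at this

variable (k S) in
/-- inclusion as the bottom edge -/
def emb (p : ℕ) : ((Fin p → ↥S) → k) →ₗ[k] ((Fin p → ↥S) → Finset (Fin n) → k) where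
  toFun f := fun T G => if G = ∅ then f T else 0
  map_add' f g := by funext T G; simp only [Pi.add_apply]; split_ifs <;> simp
  map_smul' c f := by funext T G; simp

lemma emb_inj (p : ℕ) (f) (h : emb k S p f = 0) : f = 0 := by
  funext T
  have := congrFun (congrFun h T) ∅
  simpa [emb] using this

lemma del_single (A : Finset (Fin n)) (v) (hv : v ∈ A) (φ : Finset (Fin n) → k) (h : del k A φ = 0) : φ ∅ = 0 := by
  have := congrFun h {v}
  rw [del_apply _ _ _ (by simpa using hv)] at this
  simp only [Finset.sum_singleton, Finset.erase_singleton, Pi.zero_apply] at this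
  have h2 := eps_sq (k := k) v {v}
  rcases mul_eq_zero.1 this with h | h
  · rw [h] at h2; simp at h2
  · exact h

lemma emb_CC (F : Finset (Fin n)) (p : ℕ) :
    (CC k S F p).map (emb k S p) = BD k S F p 0 ⊓ LinearMap.ker (bdv k S F p) := by
  ext x
  constructor
  · rintro ⟨f, hf, rfl⟩
    refine ⟨?_, ?_⟩
    · intro T G h
      by_cases hG : G = ∅
      · subst hG; simp
      · exact absurd (if_neg hG) h
    · rw [SetLike.mem_coe, LinearMap.mem_ker]
      funext T G
      rw [bdv_apply]
      by_cases hF : F ⊆ un T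
      · by_cases hG : G ⊆ F \ un T
        · rw [del_apply _ _ _ hG]
          rw [Finset.sdiff_eq_empty_iff_subset.2 hF, Finset.subset_empty] at hG
          rw [hG]; simp
        · rw [del_apply_not _ _ _ hG]; rfl
      · have : emb k S p f T = 0 := by
          funext G
          simp [emb, hf T hF]
        rw [this, map_zero]; rfl
  · rintro ⟨hx, hx2⟩
    refine ⟨fun T => x T ∅, ?_, ?_⟩
    · intro T hT
      obtain ⟨v, hv, hv2⟩ := Finset.not_subset.1 hT
      exact del_single (F \ un T) v (Finset.mem_sdiff.2 ⟨hv, hv2⟩) _ (congrFun hx2 T)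
    · funext T G
      by_cases hG : G = ∅
      · subst hG; simp [emb]
      · have : x T G = 0 := by
          by_contra h
          exact hG (Finset.card_eq_zero.1 (hx T G h).2)
        simp [emb, hG, this]

lemma emb_cbd (F : Finset (Fin n)) (p : ℕ) (f) : bdh k S F p (emb k S p f) = emb k S (p+1) (cbd k S p f) := by
  funext T G
  by_cases hG : G = ∅
  · subst hG
    rw [bdh_apply _ _ _ _ _ (by simp)]
    simp [emb, sd, cbd]
  · have : emb k S (p+1) (cbd k S p f) T G = 0 := if_neg hG
    rw [this]
    by_cases h : G ⊆ F \ un T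
    · rw [bdh_apply _ _ _ _ _ h]
      simp [sd, emb, hG]
    · rw [bdh_apply_not _ _ _ _ _ h]

lemma cbd_cbd (p : ℕ) (f) : cbd k S (p+1) (cbd k S p f) = 0 := by
  funext T
  have := sd_sd (k := k) f T
  simpa [sd, cbd] using this

lemma CB_le_CZ (F : Finset (Fin n)) (p : ℕ) : CB k S F p ≤ CZ k S F p := by
  cases p with
  | zero => exact bot_le
  | succ p =>
    rintro _ ⟨f, hf, rfl⟩
    refine ⟨?_, cbd_cbd p f⟩
    intro T hT
    have : ∀ i : Fin (p+1), (-1:k)^(i:ℕ) * f (T ∘ i.succAbove) = 0 := fun i => by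
      rw [hf _ (fun h => hT (h.trans (un_face T i))), mul_zero]
    simp [cbd, this]

variable (k S) in
/-- evaluation at the empty tuple -/
def ev0 : ((Fin 0 → ↥S) → Finset (Fin n) → k) →ₗ[k] (Finset (Fin n) → k) :=
  LinearMap.proj (fun i => i.elim0)

lemma ev0_apply (f) (T) : ev0 k S f = f T := by
  rw [Subsingleton.elim T (fun i => i.elim0)]; rfl

lemma ev0_inj (f) (h : ev0 k S f = 0) : f = 0 := by
  funext T
  rw [← ev0_apply f T, h]; rfl

lemma un_zero (T : Fin 0 → ↥S) : un T = ∅ := by ext j; simp [mem_un]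

lemma ev0_MC (F : Finset (Fin n)) (q : ℕ) :
    (BD k S F 0 q ⊓ LinearMap.ker (bdh k S F 0)).map (ev0 k S) = MC k S F q := by
  ext φ
  constructor
  · rintro ⟨f, ⟨hf, hf2⟩, rfl⟩
    intro G h
    rw [ev0_apply f (fun i => i.elim0)] at h
    have := hf _ _ h
    rw [un_zero, Finset.sdiff_empty] at this
    refine ⟨this.1, fun s hs hd => h ?_, this.2⟩
    have h2 := congrFun (congrFun hf2 (fun _ => ⟨s, hs⟩)) G
    rw [bdh_apply, sd_cons0 _ _ (fun i => i.elim0)] at h2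
    · exact h2
    · intro j hj
      refine Finset.mem_sdiff.2 ⟨this.1 hj, fun h => ?_⟩
      obtain ⟨i, hi⟩ := (mem_un _ _).1 h
      exact Finset.disjoint_left.1 hd hi hj
  · intro hφ
    refine ⟨fun _ => φ, ⟨?_, ?_⟩, rfl⟩
    · intro T G h
      rw [un_zero, Finset.sdiff_empty]
      exact ⟨(hφ G h).1, (hφ G h).2.2⟩
    · rw [SetLike.mem_coe, LinearMap.mem_ker]
      funext T G
      by_cases hG : G ⊆ F \ un T
      · rw [bdh_apply _ _ _ _ _ hG, sd_cons0 _ _ (fun i => i.elim0)]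
        by_contra h
        refine (hφ G h).2.1 (T 0).1 (T 0).2 (Finset.disjoint_left.2 fun j hj hjG => ?_)
        exact (Finset.mem_sdiff.1 (hG hjG)).2 ((mem_un T j).2 ⟨0, hj⟩)
      · rw [bdh_apply_not _ _ _ _ _ hG]; rfl

lemma ev0_del (F : Finset (Fin n)) (f) : ev0 k S (bdv k S F 0 f) = del k F (ev0 k S f) := by
  rw [ev0_apply _ (fun i => i.elim0), ev0_apply _ (fun i => i.elim0), bdv_apply, un_zero, Finset.sdiff_empty]

theorem B1_zero (F : Finset (Fin n)) : Nonempty (HQ (CZ k S F 0) (CB k S F 0) ≃ₗ[k] HQ (MZ k S F 0) (MB k S F 0)) := by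
  refine zz (ev0 k S ∘ₗ emb k S 0) _ _ ?_ (CB_le_CZ _ _) _ _ ?_ ?_
  · intro x _ h
    have := emb_inj _ _ (ev0_inj _ h)
    rw [this]; exact Submodule.zero_mem _
  · ext φ
    constructor
    · rintro ⟨f, ⟨hf, hf2⟩, rfl⟩
      have h1 : (ev0 k S ∘ₗ emb k S 0) f ∈ MC k S F 0 := by
        rw [← ev0_MC]
        refine ⟨emb k S 0 f, ⟨?_, ?_⟩, rfl⟩
        · have : emb k S 0 f ∈ (CC k S F 0).map (emb k S 0) := ⟨f, hf, rfl⟩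
          rw [emb_CC] at this
          exact this.1
        · have hf3 : cbd k S 0 f = 0 := hf2
          rw [SetLike.mem_coe, LinearMap.mem_ker, emb_cbd, hf3, map_zero]
      refine ⟨h1, ?_⟩
      have : emb k S 0 f ∈ (CC k S F 0).map (emb k S 0) := ⟨f, hf, rfl⟩
      rw [emb_CC] at this
      have h3 : bdv k S F 0 (emb k S 0 f) = 0 := this.2
      rw [SetLike.mem_coe, LinearMap.mem_ker, LinearMap.comp_apply, ← ev0_del, h3, map_zero]
    · rintro ⟨h1, h2⟩
      rw [SetLike.mem_coe, ← ev0_MC] at h1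
      obtain ⟨x, ⟨hx, hx2⟩, rfl⟩ := h1
      have h3 : bdv k S F 0 x = 0 := by
        apply ev0_inj
        rw [ev0_del]; exact h2
      have : x ∈ (CC k S F 0).map (emb k S 0) := by
        rw [emb_CC]; exact ⟨hx, h3⟩
      obtain ⟨f, hf, rfl⟩ := this
      refine ⟨f, ⟨hf, ?_⟩, rfl⟩
      rw [SetLike.mem_coe, LinearMap.mem_ker]
      apply emb_inj
      rw [← emb_cbd F]; exact hx2
  · exact Submodule.map_bot _

theorem B1_succ (F : Finset (Fin n)) (p : ℕ) :
    Nonempty (HQ (CZ k S F (p+1)) (CB k S F (p+1)) ≃ₗ[k] HQ (MZ k S F (p+1)) (MB k S F (p+1))) := by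
  obtain ⟨e⟩ := zig_coh (fun p => (Fin p → ↥S) → Finset (Fin n) → k) (bdh k S F) (bdv k S F) (BD k S F)
    (BD_h F) (BD_v F) (fun p q x _ => BD_comm F p x) (fun p q x _ => BD_h2 F p x) (fun p q x _ => BD_v2 F p x)
    (BD_row F) (BD_col F) p
  obtain ⟨e1⟩ := zz (emb k S (p+1)) (CZ k S F (p+1)) (CB k S F (p+1))
    (fun x _ h => by rw [emb_inj _ _ h]; exact Submodule.zero_mem _) (CB_le_CZ _ _) 
    (BD k S F (p+1) 0 ⊓ LinearMap.ker (bdh k S F (p+1)) ⊓ LinearMap.ker (bdv k S F (p+1)))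
    ((BD k S F p 0 ⊓ LinearMap.ker (bdv k S F p)).map (bdh k S F p)) (by
      rw [inf_right_comm, ← emb_CC]
      ext x
      constructor
      · rintro ⟨f, ⟨hf, hf2⟩, rfl⟩
        have hf3 : cbd k S _ f = 0 := hf2
        refine ⟨⟨f, hf, rfl⟩, ?_⟩
        rw [SetLike.mem_coe, LinearMap.mem_ker, emb_cbd, hf3, map_zero]
      · rintro ⟨⟨f, hf, rfl⟩, h⟩
        refine ⟨f, ⟨hf, ?_⟩, rfl⟩
        rw [SetLike.mem_coe, LinearMap.mem_ker]
        apply emb_inj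
        rw [← emb_cbd F]; exact h) (by
      rw [← emb_CC]
      change ((CC k S F p).map (cbd k S p)).map _ = _
      rw [← Submodule.map_comp, ← Submodule.map_comp]
      congr 1
      exact LinearMap.ext fun f => (emb_cbd F p f).symm)
  obtain ⟨e2⟩ := zz (ev0 k S) (BD k S F 0 (p+1) ⊓ LinearMap.ker (bdh k S F 0) ⊓ LinearMap.ker (bdv k S F 0))
        ((BD k S F 0 p ⊓ LinearMap.ker (bdh k S F 0)).map (bdv k S F 0))
    (fun x _ h => by rw [ev0_inj _ h]; exact Submodule.zero_mem _) (by
      rintro _ ⟨x, ⟨hx, hx2⟩, rfl⟩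
      have hx3 : bdh k S F 0 x = 0 := hx2
      refine ⟨⟨BD_v _ _ _ _ hx, ?_⟩, BD_v2 _ _ _⟩
      rw [SetLike.mem_coe, LinearMap.mem_ker, BD_comm, hx3, map_zero])
    (MZ k S F (p+1)) (MB k S F (p+1)) (by
      rw [MZ, ← ev0_MC]
      ext x
      constructor
      · rintro ⟨f, ⟨hf, hf2⟩, rfl⟩
        have hf3 : bdv k S F 0 f = 0 := hf2
        refine ⟨⟨f, hf, rfl⟩, ?_⟩
        rw [SetLike.mem_coe, LinearMap.mem_ker, ← ev0_del, hf3, map_zero]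
      · rintro ⟨⟨f, hf, rfl⟩, h⟩
        refine ⟨f, ⟨hf, ?_⟩, rfl⟩
        rw [SetLike.mem_coe, LinearMap.mem_ker]
        apply ev0_inj
        rw [ev0_del]; exact h) (by
      change _ = (MC k S F p).map (del k F)
      rw [← ev0_MC, ← Submodule.map_comp, ← Submodule.map_comp]
      congr 1
      exact LinearMap.ext fun f => ev0_del F f)
  exact ⟨(e1.trans e).trans e2⟩

theorem B1 (F : Finset (Fin n)) (p : ℕ) :
    Nonempty (HQ (CZ k S F p) (CB k S F p) ≃ₗ[k] HQ (MZ k S F p) (MB k S F p)) := by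
  cases p with
  | zero => exact B1_zero F
  | succ p => exact B1_succ F p

/-- vanishing beyond the size of `F` -/
lemma MZ_large (F : Finset (Fin n)) (r : ℕ) (h : F.card < r) : Module.finrank k (HQ (MZ k S F r) (MB k S F r)) = 0 := by
  apply HQ_zero
  rintro x ⟨hx, _⟩
  have : x = 0 := by
    funext G
    by_contra h2
    have := hx G h2
    have := Finset.card_le_card this.1
    omega
  rw [this]; exact Submodule.zero_mem _

lemma cov_mono {G G' : Finset (Fin n)} (h : G ⊆ G') (hG : cov S G) : cov S G' :=
  fun s hs hd => hG s hs (hd.mono_right h)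

lemma MZ_notcov (F : Finset (Fin n)) (r : ℕ) (h : ¬ cov S F) : Module.finrank k (HQ (MZ k S F r) (MB k S F r)) = 0 := by
  apply HQ_zero
  rintro x ⟨hx, _⟩
  have : x = 0 := by
    funext G
    by_contra h2
    have := hx G h2
    exact h (cov_mono this.1 this.2.1)
  rw [this]; exact Submodule.zero_mem _

lemma MZ_cone (F : Finset (Fin n)) (r : ℕ) (v : Fin n) (hv : v ∈ F)
    (h : ∀ G, G ⊆ F → cov S G → cov S (G.erase v)) : Module.finrank k (HQ (MZ k S F r) (MB k S F r)) = 0 := by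
  apply HQ_zero
  rintro x ⟨hx, hx2⟩
  have h2 := tog_del (k := k) F v hv x (fun G h => (hx G h).1)
  have h3 : del k F x = 0 := hx2
  have h4 : tog v (0 : Finset (Fin n) → k) = 0 := by funext G; simp [tog]
  rw [h3, h4, add_zero] at h2
  have key : ∀ G, tog v x G ≠ 0 → G ⊆ F ∧ cov S G ∧ G.card + 1 = r := by
    intro G hG
    by_cases hvG : v ∈ G
    · exact absurd (tog_mem _ _ _ hvG) hG
    · rw [tog_not _ _ _ hvG] at hG
      obtain ⟨a, b, c⟩ := hx _ (right_ne_zero_of_mul hG)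
      have := h _ a b
      rw [Finset.erase_insert hvG] at this
      rw [Finset.card_insert_of_notMem hvG] at c
      exact ⟨(Finset.subset_insert _ _).trans a, this, c⟩
  cases r with
  | zero =>
    have : tog v x = 0 := by
      funext G
      by_contra hG
      have := (key G hG).2.2
      omega
    rw [this, map_zero] at h2
    rw [← h2]; exact Submodule.zero_mem _
  | succ r =>
    refine ⟨tog v x, fun G hG => ?_, h2⟩
    obtain ⟨a, b, c⟩ := key G hG
    exact ⟨a, b, by omega⟩
end PartD

section PartE
variable {n : ℕ} {k : Type} [Field k] {S : Finset (Finset (Fin n))}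
variable {P : Type} [PartialOrder P]

/-- face of a chain -/
def face {m : ℕ} (c : pchains P (m+1)) (i : Fin (m+1)) : pchains P m :=
  ⟨c.1 ∘ i.succAbove, c.2.comp (Fin.strictMono_succAbove i)⟩

lemma bd_single {V : Type} [AddCommGroup V] [Module k V] {m : ℕ} (c : pchains P (m+1)) (z : V) :
    simpBdry k V P m (Finsupp.single c z) =
      ∑ i : Fin (m+1), (-1:k)^(i:ℕ) • Finsupp.single (face c i) z := by
  rw [simpBdry, Finsupp.lsum_single, LinearMap.sum_apply]
  rfl

lemma bd_eq {V : Type} [AddCommGroup V] [Module k V] {m : ℕ} (x : pchains P (m+1) →₀ V) :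
    simpBdry k V P m x = ∑ c ∈ x.support, ∑ i : Fin (m+1), (-1:k)^(i:ℕ) • Finsupp.single (face c i) (x c) := by
  conv_lhs => rw [← Finsupp.sum_single x, Finsupp.sum, map_sum]
  exact Finset.sum_congr rfl fun c _ => bd_single c _

lemma bd_map {V V' : Type} [AddCommGroup V] [Module k V] [AddCommGroup V'] [Module k V'] (f : V →ₗ[k] V')
    {m : ℕ} (x : pchains P (m+1) →₀ V) :
    simpBdry k V' P m (Finsupp.mapRange.linearMap f x) = Finsupp.mapRange.linearMap f (simpBdry k V P m x) := by
  induction x using Finsupp.induction_linear with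
  | zero => simp
  | add x y hx hy => simp only [map_add, hx, hy]
  | single c z =>
    rw [bd_single, Finsupp.mapRange.linearMap_apply, Finsupp.mapRange_single, bd_single, map_sum]
    refine Finset.sum_congr rfl fun i _ => ?_
    rw [map_smul, Finsupp.mapRange.linearMap_apply, Finsupp.mapRange_single]

/-- chain constructor -/
def mkc {m : ℕ} (τ : Fin m → P) (h : StrictMono τ) : pchains P m := ⟨τ, h⟩

open Classical in
/-- single, extended by zero -/
noncomputable def sgl {V : Type} [AddCommGroup V] {m : ℕ} (z : V) (τ : Fin m → P) : pchains P m →₀ V :=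
  if h : StrictMono τ then Finsupp.single (mkc τ h) z else 0

lemma sgl_val {V : Type} [AddCommGroup V] {m : ℕ} (z : V) (c : pchains P m) : sgl z c.1 = Finsupp.single c z := by
  rw [sgl, dif_pos c.2]; rfl

lemma bd_sgl {V : Type} [AddCommGroup V] [Module k V] {m : ℕ} (τ : Fin (m+1) → P) (h : StrictMono τ) (z : V) :
    simpBdry k V P m (sgl z τ) = sd k (sgl z) τ := by
  rw [sgl, dif_pos h, bd_single, sd]
  refine Finset.sum_congr rfl fun i _ => ?_
  rw [← sgl_val]; rfl

lemma bd_bd {V : Type} [AddCommGroup V] [Module k V] {m : ℕ} (x : pchains P (m+2) →₀ V) :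
    simpBdry k V P m (simpBdry k V P (m+1) x) = 0 := by
  induction x using Finsupp.induction_linear with
  | zero => simp
  | add x y hx hy => simp only [map_add, hx, hy, add_zero]
  | single c z =>
    rw [← sgl_val, bd_sgl _ c.2, sd, map_sum]
    have := sd_sd (k := k) (sgl z) c.1
    refine Eq.trans ?_ this
    rw [sd]
    refine Finset.sum_congr rfl fun i _ => ?_
    have h2 := bd_sgl (k := k) (c.1 ∘ i.succAbove) (face c i).2 z
    rw [map_smul, h2]

variable (k P) in
/-- cone with apex `u` -/
noncomputable def hcon (V : Type) [AddCommGroup V] [Module k V] (u : P) (m : ℕ) :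
    (pchains P m →₀ V) →ₗ[k] (pchains P (m+1) →₀ V) :=
  Finsupp.lsum ℕ fun c => open Classical in
    if h : StrictMono (Fin.cons u c.1 : Fin (m+1) → P) then Finsupp.lsingle ⟨_, h⟩ else 0

lemma hcon_single {V : Type} [AddCommGroup V] [Module k V] (u : P) {m : ℕ} (c : pchains P m) (z : V) :
    hcon k P V u m (Finsupp.single c z) = sgl z (Fin.cons u c.1 : Fin (m+1) → P) := by
  rw [hcon, Finsupp.lsum_single, sgl]
  split_ifs <;> rfl

lemma hcon_eq {V : Type} [AddCommGroup V] [Module k V] (u : P) {m : ℕ} (x : pchains P m →₀ V) :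
    hcon k P V u m x = ∑ c ∈ x.support, sgl (x c) (Fin.cons u c.1 : Fin (m+1) → P) := by
  conv_lhs => rw [← Finsupp.sum_single x, Finsupp.sum, map_sum]
  exact Finset.sum_congr rfl fun c _ => hcon_single u c _

lemma strictMono_cons {m : ℕ} (u : P) (c : Fin m → P) :
    StrictMono (Fin.cons u c : Fin (m+1) → P) ↔ StrictMono c ∧ ∀ i, u < c i := by
  constructor
  · intro h
    refine ⟨fun i j hij => ?_, fun i => ?_⟩
    · have := h (Fin.succ_lt_succ_iff.2 hij)
      simpa using this
    · have := h (Fin.succ_pos i)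
      simpa using this
  · rintro ⟨h1, h2⟩ i j
    refine Fin.cases ?_ (fun i => ?_) i <;> refine Fin.cases ?_ (fun j => ?_) j
    · intro h; exact absurd h (lt_irrefl _)
    · intro _; simpa using h2 j
    · intro h; exact absurd h (by simp)
    · intro h; simpa using h1 (Fin.succ_lt_succ_iff.1 h)

lemma hcon_id_single {V : Type} [AddCommGroup V] [Module k V] (u : P) {m : ℕ} (c : pchains P (m+1))
    (hc : ∀ i, u ≤ c.1 i) (z : V) :
    simpBdry k V P (m+1) (hcon k P V u (m+1) (Finsupp.single c z)) +
      hcon k P V u m (simpBdry k V P m (Finsupp.single c z)) = Finsupp.single c z := by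
  have e2 : hcon k P V u m (simpBdry k V P m (Finsupp.single c z)) =
      sd k (fun τ => sgl z (Fin.cons u τ : Fin (m+1) → P)) c.1 := by
    rw [bd_single, map_sum, sd]
    refine Finset.sum_congr rfl fun i _ => ?_
    rw [map_smul, hcon_single]
    rfl
  by_cases h : StrictMono (Fin.cons u c.1 : Fin (m+2) → P)
  · rw [hcon_single, bd_sgl _ h, e2, sd_cons, sub_add_cancel, sgl_val]
  · have h0 : u = c.1 0 := by
      by_contra hne
      apply h
      rw [strictMono_cons]
      exact ⟨c.2, fun i => lt_of_lt_of_le (lt_of_le_of_ne (hc 0) hne) (c.2.monotone (Fin.zero_le i))⟩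
    rw [hcon_single, sgl, dif_neg h, map_zero, zero_add, e2, sd, Fin.sum_univ_succ, Finset.sum_eq_zero, add_zero]
    · have : (Fin.cons u (c.1 ∘ (0 : Fin (m+1)).succAbove) : Fin (m+1) → P) = c.1 := by
        funext i
        refine Fin.cases ?_ (fun i => ?_) i
        · simp [h0]
        · simp
      simp only [this, sgl_val]
      simp
    · intro i _
      rw [sgl, dif_neg, smul_zero]
      rw [strictMono_cons]
      rintro ⟨_, h2⟩
      cases m with
      | zero => exact i.elim0
      | succ m =>
        have := h2 0
        simp [h0] at this

lemma hcon_id {V : Type} [AddCommGroup V] [Module k V] (u : P) {m : ℕ} (x : pchains P (m+1) →₀ V)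
    (hx : ∀ c, x c ≠ 0 → ∀ i, u ≤ c.1 i) :
    simpBdry k V P (m+1) (hcon k P V u (m+1) x) + hcon k P V u m (simpBdry k V P m x) = x := by
  conv_rhs => rw [← Finsupp.sum_single x, Finsupp.sum]
  conv_lhs => rw [← Finsupp.sum_single x, Finsupp.sum, map_sum, map_sum, map_sum, map_sum, ← Finset.sum_add_distrib]
  exact Finset.sum_congr rfl fun c hc => hcon_id_single u c (hx c (Finsupp.mem_support_iff.1 hc)) _

lemma hcon_id0 {V : Type} [AddCommGroup V] [Module k V] (u : P) (x : pchains P 0 →₀ V) :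
    simpBdry k V P 0 (hcon k P V u 0 x) = x := by
  induction x using Finsupp.induction_linear with
  | zero => simp
  | add x y hx hy => simp only [map_add, hx, hy]
  | single c z =>
    rw [hcon_single, bd_sgl, sd_cons0 _ _ c.1, sgl_val]
    intro i j h
    exact absurd (Subsingleton.elim (α := Fin 1) i j) (ne_of_lt h)

lemma bd_ne {m : ℕ} (x : pchains P (m+1) →₀ (Finset (Fin n) → k)) (c' G)
    (h : simpBdry k (Finset (Fin n) → k) P m x c' G ≠ 0) : ∃ c i, c' = face c i ∧ x c G ≠ 0 := by
  rw [bd_eq, Finsupp.finsetSum_apply, Finset.sum_apply] at h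
  obtain ⟨c, _, h⟩ := Finset.exists_ne_zero_of_sum_ne_zero h
  rw [Finsupp.finsetSum_apply, Finset.sum_apply] at h
  obtain ⟨i, _, h⟩ := Finset.exists_ne_zero_of_sum_ne_zero h
  rw [Finsupp.smul_apply, Pi.smul_apply] at h
  have h := right_ne_zero_of_smul h
  by_cases hc : face c i = c'
  · refine ⟨c, i, hc.symm, ?_⟩
    rw [hc, Finsupp.single_eq_same] at h
    exact h
  · rw [Finsupp.single_eq_of_ne' hc] at h
    exact absurd rfl h

lemma hcon_ne (u : P) {m : ℕ} (x : pchains P m →₀ (Finset (Fin n) → k)) (c' G)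
    (h : hcon k P (Finset (Fin n) → k) u m x c' G ≠ 0) :
    ∃ c : pchains P m, c'.1 = (Fin.cons u c.1 : Fin (m+1) → P) ∧ x c G ≠ 0 := by
  rw [hcon_eq, Finsupp.finsetSum_apply, Finset.sum_apply] at h
  obtain ⟨c, _, h⟩ := Finset.exists_ne_zero_of_sum_ne_zero h
  rw [sgl] at h
  split_ifs at h with hs
  · by_cases hc : mkc _ hs = c'
    · refine ⟨c, by rw [← hc]; rfl, ?_⟩
      rw [hc, Finsupp.single_eq_same] at h
      exact h
    · rw [Finsupp.single_eq_of_ne' hc] at h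
      exact absurd rfl h
  · exact absurd rfl h

variable (k S) in
/-- pieces of the second double complex -/
def ED (F : Finset (Fin n)) (st : P → Finset (Fin n)) (m q : ℕ) :
    Submodule k (pchains P m →₀ (Finset (Fin n) → k)) where
  carrier := {w | ∀ c G, w c G ≠ 0 → G ⊆ F ∧ cov S G ∧ G.card + q = F.card ∧ ∀ i, st (c.1 i) ⊆ G}
  zero_mem' := fun _ _ h => absurd rfl h
  add_mem' := fun {a b} ha hb T G h => by
    by_cases h1 : a T G = 0
    · exact hb T G (fun h2 => h (by simp [h1, h2]))
    · exact ha T G h1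
  smul_mem' := fun c f hf T G h => hf T G (fun h2 => h (by simp [h2]))

variable (k P) in
/-- vertical map -/
noncomputable def edv (F : Finset (Fin n)) (m : ℕ) : (pchains P m →₀ (Finset (Fin n) → k)) →ₗ[k]
    (pchains P m →₀ (Finset (Fin n) → k)) := Finsupp.mapRange.linearMap (del k F)

lemma edv_apply (F : Finset (Fin n)) (m : ℕ) (x) (c) : edv k P F m x c = del k F (x c) := rfl

lemma ED_h (F : Finset (Fin n)) (st : P → Finset (Fin n)) (p q : ℕ) (x) (hx : x ∈ ED k S F st (p+1) q) :
    simpBdry k _ P p x ∈ ED k S F st p q := by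
  intro c' G h
  obtain ⟨c, i, rfl, hc⟩ := bd_ne x c' G h
  obtain ⟨h1, h2, h3, h4⟩ := hx c G hc
  exact ⟨h1, h2, h3, fun j => h4 _⟩

lemma ED_v (F : Finset (Fin n)) (st : P → Finset (Fin n)) (p q : ℕ) (x) (hx : x ∈ ED k S F st p (q+1)) :
    edv k P F p x ∈ ED k S F st p q := by
  intro c G h
  rw [edv_apply] at h
  by_cases hG : G ⊆ F
  · rw [del_apply _ _ _ hG] at h
    obtain ⟨i, hi1, hi⟩ := Finset.exists_ne_zero_of_sum_ne_zero h
    obtain ⟨h1, h2, h3, h4⟩ := hx _ _ (right_ne_zero_of_mul hi)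
    have := Finset.card_erase_add_one hi1
    exact ⟨hG, cov_mono (Finset.erase_subset _ _) h2, by omega, fun j => (h4 j).trans (Finset.erase_subset _ _)⟩
  · exact absurd (del_apply_not _ _ _ hG) h

lemma ED_v0 (F : Finset (Fin n)) (st : P → Finset (Fin n)) (p : ℕ) (x) (hx : x ∈ ED k S F st p 0) :
    edv k P F p x = 0 := by
  ext c G
  rw [edv_apply]
  by_contra h
  by_cases hG : G ⊆ F
  · rw [del_apply _ _ _ hG] at h
    obtain ⟨i, hi1, hi⟩ := Finset.exists_ne_zero_of_sum_ne_zero h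
    obtain ⟨h1, h2, h3, h4⟩ := hx _ _ (right_ne_zero_of_mul hi)
    have := Finset.card_erase_add_one hi1
    have := Finset.card_le_card hG
    omega
  · exact absurd (del_apply_not _ _ _ hG) h

lemma ED_row (F : Finset (Fin n)) (st : P → Finset (Fin n))
    (hst : ∀ q q' : P, q ≤ q' ↔ st q' ⊆ st q)
    (hu : ∀ G, cov S G → G ⊆ F → G ≠ F → ∃ u, st u ⊆ G ∧ ∀ q, st q ⊆ G → st q ⊆ st u)
    (p q : ℕ) (x) (hx : x ∈ ED k S F st p (q+1))
    (h0 : x ∈ kh (W := fun m => pchains P m →₀ (Finset (Fin n) → k)) (fun m => simpBdry k _ P m) p) :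
    ∃ y ∈ ED k S F st (p+1) (q+1), simpBdry k _ P p y = x := by
  classical
  let pi : Finset (Fin n) → (Finset (Fin n) → k) →ₗ[k] (Finset (Fin n) → k) :=
    fun G => LinearMap.single k _ G ∘ₗ LinearMap.proj G
  let xG : Finset (Fin n) → pchains P p →₀ (Finset (Fin n) → k) := fun G => Finsupp.mapRange.linearMap (pi G) x
  have xG_apply : ∀ G c, xG G c = Pi.single G (x c G) := fun G c => rfl
  have hsum : ∑ G, xG G = x := by
    ext1 c
    rw [Finsupp.finsetSum_apply]
    simp only [xG_apply]
    exact Finset.univ_sum_single (x c)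
  have key : ∀ G, ∃ y ∈ ED k S F st (p+1) (q+1), simpBdry k _ P p y = xG G := by
    intro G
    by_cases hz : xG G = 0
    · exact ⟨0, Submodule.zero_mem _, by rw [hz, map_zero]⟩
    have hz' : ∀ c G', xG G c G' ≠ 0 → G' = G ∧ x c G ≠ 0 := by
      intro c G' h
      rw [xG_apply] at h
      by_cases hG : G' = G
      · subst hG
        rw [Pi.single_eq_same] at h
        exact ⟨rfl, h⟩
      · rw [Pi.single_eq_of_ne hG] at h
        exact absurd rfl h
    have hex : ∃ c, x c G ≠ 0 := by
      by_contra hne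
      push Not at hne
      apply hz
      ext c G'
      by_contra h
      exact (hz' c G' h).2 (hne c)
    obtain ⟨c0, hc0⟩ := hex
    obtain ⟨a1, a2, a3, _⟩ := hx c0 G hc0
    obtain ⟨u, hu1, hu2⟩ := hu G a2 a1 (fun h => by rw [h] at a3; omega)
    have hle : ∀ c, xG G c ≠ 0 → ∀ i, u ≤ c.1 i := by
      intro c hc i
      obtain ⟨G', hG'⟩ := Function.ne_iff.1 hc
      have := (hx c G (hz' c G' hG').2).2.2.2 i
      exact (hst _ _).2 (hu2 _ this)
    refine ⟨hcon k P _ u p (xG G), ?_, ?_⟩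
    · intro c' G' h
      obtain ⟨c, hc, hc2⟩ := hcon_ne u _ c' G' h
      obtain ⟨rfl, hc3⟩ := hz' c G' hc2
      obtain ⟨b1, b2, b3, b4⟩ := hx c _ hc3
      refine ⟨b1, b2, b3, fun i => ?_⟩
      rw [hc]
      refine Fin.cases ?_ (fun i => ?_) i
      · simpa using hu1
      · simpa using b4 i
    · cases p with
      | zero => exact hcon_id0 u _
      | succ p =>
        have h1 := hcon_id (k := k) u (xG G) hle
        have h2 : simpBdry k _ P p (xG G) = 0 := by
          have h3 : simpBdry k _ P p x = 0 := h0
          change simpBdry k _ P p (Finsupp.mapRange.linearMap (pi G) x) = 0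
          rw [bd_map, h3, map_zero]
        rw [h2, map_zero, add_zero] at h1
        exact h1
  choose y hy1 hy2 using key
  refine ⟨∑ G, y G, Submodule.sum_mem _ fun G _ => hy1 G, ?_⟩
  rw [map_sum, ← hsum]
  exact Finset.sum_congr rfl fun G _ => hy2 G

lemma ED_col (F : Finset (Fin n)) (st : P → Finset (Fin n))
    (hst : ∀ q q' : P, q ≤ q' ↔ st q' ⊆ st q)
    (hF : ∀ q, st q ⊆ F) (hF2 : ∀ q, st q ≠ F) (hcov : ∀ q, cov S (st q))
    (p q : ℕ) (x) (hx : x ∈ ED k S F st (p+1) q) (h0 : edv k P F (p+1) x = 0) :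
    ∃ y ∈ ED k S F st (p+1) (q+1), edv k P F (p+1) y = x := by
  classical
  have hv : ∀ c : pchains P (p+1), ∃ v ∈ F, v ∉ st (c.1 0) := by
    intro c
    by_contra h
    push Not at h
    exact hF2 (c.1 0) (Finset.Subset.antisymm (hF _) h)
  choose v hv1 hv2 using hv
  have h4 : ∀ v, tog v (0 : Finset (Fin n) → k) = 0 := by intro v; funext G; simp [tog]
  let y : pchains P (p+1) →₀ (Finset (Fin n) → k) :=
    Finsupp.onFinset x.support (fun c => tog (v c) (x c)) (by
      intro c hc
      rw [Finsupp.mem_support_iff]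
      intro h
      rw [h, h4] at hc
      exact hc rfl)
  have hy : ∀ c, y c = tog (v c) (x c) := fun c => rfl
  refine ⟨y, ?_, ?_⟩
  · intro c G h
    rw [hy] at h
    by_cases hvG : v c ∈ G
    · exact absurd (tog_mem _ _ _ hvG) h
    · rw [tog_not _ _ _ hvG] at h
      obtain ⟨a1, a2, a3, a4⟩ := hx _ _ (right_ne_zero_of_mul h)
      rw [Finset.card_insert_of_notMem hvG] at a3
      have a5 : ∀ i, st (c.1 i) ⊆ G := by
        intro i j hj
        have hj2 := a4 i hj
        rcases Finset.mem_insert.1 hj2 with rfl | h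
        · exact absurd ((hst _ _).1 (c.2.monotone (Fin.zero_le i)) hj) (hv2 c)
        · exact h
      exact ⟨(Finset.subset_insert _ _).trans a1, cov_mono (a5 0) (hcov _), by omega, a5⟩
  · ext1 c
    rw [edv_apply, hy]
    have h2 := tog_del (k := k) F (v c) (hv1 c) (x c) (fun G h => (hx c G h).1)
    have h3 : del k F (x c) = 0 := by rw [← edv_apply, h0]; rfl
    rw [h3, h4, add_zero] at h2
    exact h2

/-- unique empty chain -/
def c00 : pchains P 0 := ⟨fun i => i.elim0, fun i => i.elim0⟩

lemma c00_eq (c : pchains P 0) : c = c00 := Subtype.ext (Subsingleton.elim _ _)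

lemma mapF (F : Finset (Fin n)) (st : P → Finset (Fin n)) (hF : ∀ q, st q ⊆ F) (hcF : cov S F) (r : ℕ) :
    LinearMap.range (Finsupp.mapRange.linearMap (α := pchains P r) (LinearMap.single k (fun _ : Finset (Fin n) => k) F)) =
      ED k S F st r 0 := by
  ext x
  constructor
  · rintro ⟨f, rfl⟩ c G h
    have h : (Pi.single F (f c) : Finset (Fin n) → k) G ≠ 0 := h
    by_cases hG : G = F
    · subst hG
      exact ⟨subset_rfl, hcF, rfl, fun i => hF _⟩
    · rw [Pi.single_eq_of_ne hG] at h
      exact absurd rfl h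
  · intro hx
    refine ⟨Finsupp.mapRange.linearMap (LinearMap.proj (R := k) (φ := fun _ : Finset (Fin n) => k) F) x, ?_⟩
    ext c G
    change (Pi.single F (x c F) : Finset (Fin n) → k) G = x c G
    by_cases hG : G = F
    · subst hG; simp
    · rw [Pi.single_eq_of_ne hG]
      by_contra h
      have := hx c G (Ne.symm h)
      exact hG (Finset.eq_of_subset_of_card_le this.1 (by omega))

lemma mapF_inj (F : Finset (Fin n)) (r : ℕ) :
    Function.Injective (Finsupp.mapRange.linearMap (α := pchains P r) (LinearMap.single k (fun _ : Finset (Fin n) => k) F)) := by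
  rw [Finsupp.mapRange.linearMap]
  exact Finsupp.mapRange_injective _ (map_zero _) (fun a b h => Pi.single_injective (M := fun _ : Finset (Fin n) => k) F h)

theorem B2 (F : Finset (Fin n)) (st : P → Finset (Fin n)) (hcF : cov S F)
    (hst : ∀ q q' : P, q ≤ q' ↔ st q' ⊆ st q)
    (hF : ∀ q, st q ⊆ F) (hF2 : ∀ q, st q ≠ F) (hcov : ∀ q, cov S (st q))
    (hu : ∀ G, cov S G → G ⊆ F → G ≠ F → ∃ u, st u ⊆ G ∧ ∀ q, st q ⊆ G → st q ⊆ st u)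
    (r : ℕ) (hr : r ≤ F.card) :
    Nonempty (simpHomology k k P (F.card - r) ≃ₗ[k] HQ (MZ k S F r) (MB k S F r)) := by
  obtain ⟨q, hq⟩ : ∃ q, q = F.card - r := ⟨_, rfl⟩
  rw [← hq]
  have hq' : r + q = F.card := by omega
  obtain ⟨e⟩ := zig_hom (fun m => pchains P m →₀ (Finset (Fin n) → k)) (fun m => simpBdry k _ P m) (edv k P F)
    (ED k S F st) (ED_h F st) (ED_v F st) (ED_v0 F st)
    (fun p q x _ => bd_map _ x) (fun p q x _ => bd_bd x)
    (fun p q x _ => by ext1 c; rw [edv_apply, edv_apply, del_del]; rfl)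
    (ED_row F st hst hu) (ED_col F st hst hF hF2 hcov) q
  obtain ⟨e1⟩ := zz (Finsupp.mapRange.linearMap (α := pchains P q) (LinearMap.single k (fun _ : Finset (Fin n) => k) F))
    (simpCycles k k P q) (LinearMap.range (simpBdry k k P q))
    (fun x _ h => by
      rw [mapF_inj F q (h.trans (map_zero _).symm)]; exact Submodule.zero_mem _)
    (by
      rintro _ ⟨x, rfl⟩
      cases q with
      | zero => trivial
      | succ q => exact bd_bd x)
    (ED k S F st q 0 ⊓ kh (W := fun m => pchains P m →₀ (Finset (Fin n) → k)) (fun m => simpBdry k _ P m) q)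
    ((ED k S F st (q+1) 0).map (simpBdry k _ P q))
    (by
      rw [← mapF F st hF hcF]
      cases q with
      | zero =>
        change Submodule.map _ ⊤ = _ ⊓ ⊤
        rw [inf_top_eq, Submodule.map_top]
      | succ q =>
        change Submodule.map _ (LinearMap.ker _) = _ ⊓ LinearMap.ker _
        ext x
        constructor
        · rintro ⟨f, hf, rfl⟩
          have hf' : simpBdry k k P q f = 0 := hf
          refine ⟨⟨f, rfl⟩, ?_⟩
          rw [SetLike.mem_coe, LinearMap.mem_ker, bd_map, hf', map_zero]
        · rintro ⟨⟨f, rfl⟩, hx⟩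
          refine ⟨f, ?_, rfl⟩
          rw [SetLike.mem_coe, LinearMap.mem_ker] at hx
          rw [SetLike.mem_coe, LinearMap.mem_ker]
          apply mapF_inj F q
          rw [← bd_map, hx, map_zero])
    (by
      rw [← mapF F st hF hcF, ← LinearMap.range_comp, ← LinearMap.range_comp]
      congr 1
      exact LinearMap.ext fun f => (bd_map _ f).symm)
  have ev_inj : ∀ x : pchains P 0 →₀ (Finset (Fin n) → k), x c00 = 0 → x = 0 := by
    intro x hx
    ext1 c
    rw [c00_eq c, hx]; rfl
  have ev_MC : ∀ r q, r + q = F.card → (ED k S F st 0 q).map (Finsupp.lapply c00) = MC k S F r := by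
    intro r q h
    ext φ
    constructor
    · rintro ⟨x, hx, rfl⟩ G hG
      obtain ⟨a1, a2, a3, _⟩ := hx c00 G hG
      exact ⟨a1, a2, by omega⟩
    · intro hφ
      refine ⟨Finsupp.single c00 φ, ?_, by simp⟩
      intro c G h
      rw [c00_eq c, Finsupp.single_eq_same] at h
      obtain ⟨a1, a2, a3⟩ := hφ G h
      exact ⟨a1, a2, by omega, fun i => i.elim0⟩
  obtain ⟨e2⟩ := zz (Finsupp.lapply c00) (ED k S F st 0 q ⊓ LinearMap.ker (edv k P F 0))
    ((ED k S F st 0 (q+1)).map (edv k P F 0))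
    (fun x _ h => by rw [ev_inj x h]; exact Submodule.zero_mem _)
    (by
      rintro _ ⟨x, hx, rfl⟩
      refine ⟨ED_v F st _ _ x hx, ?_⟩
      rw [SetLike.mem_coe, LinearMap.mem_ker]
      ext1 c; rw [edv_apply, edv_apply, del_del]; rfl)
    (MZ k S F r) (MB k S F r)
    (by
      rw [MZ, ← ev_MC r q hq']
      ext φ
      constructor
      · rintro ⟨x, ⟨hx, hx2⟩, rfl⟩
        refine ⟨⟨x, hx, rfl⟩, ?_⟩
        have : edv k P F 0 x = 0 := hx2
        rw [SetLike.mem_coe, LinearMap.mem_ker, Finsupp.lapply_apply, ← edv_apply, this]; rfl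
      · rintro ⟨⟨x, hx, rfl⟩, hx2⟩
        refine ⟨x, ⟨hx, ?_⟩, rfl⟩
        rw [SetLike.mem_coe, LinearMap.mem_ker]
        apply ev_inj
        rw [edv_apply]
        exact hx2)
    (by
      cases r with
      | zero =>
        have : ED k S F st 0 (q+1) = ⊥ := by
          rw [eq_bot_iff]
          intro x hx
          rw [Submodule.mem_bot]
          ext c G
          by_contra h
          have := hx c G h
          omega
        rw [this, Submodule.map_bot, Submodule.map_bot]; rfl
      | succ r =>
        change _ = (MC k S F r).map (del k F)
        rw [← ev_MC r (q+1) (by omega), ← Submodule.map_comp, ← Submodule.map_comp]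
        rfl)
  exact ⟨(e1.trans e).trans e2⟩
end PartE

section PartH
open MvPolynomial
variable {n : ℕ} {k : Type} [Field k] {S : Finset (Finset (Fin n))}

variable (k) in
/-- the prime of a set of variables -/
noncomputable def sp (G : Finset (Fin n)) : Ideal (MvPolynomial (Fin n) k) :=
  Ideal.span (MvPolynomial.X '' (G : Set (Fin n)))

lemma X_mem_sp (G : Finset (Fin n)) (i : Fin n) : (X i : MvPolynomial (Fin n) k) ∈ sp k G ↔ i ∈ G := by
  constructor
  · intro h
    rw [sp, mem_ideal_span_X_image] at h
    obtain ⟨j, hj, hj2⟩ := h (Finsupp.single i 1) (by simp [support_X])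
    by_cases hij : i = j
    · subst hij; exact hj
    · rw [Finsupp.single_apply, if_neg hij] at hj2
      exact absurd rfl hj2
  · intro h
    exact Ideal.subset_span ⟨i, h, rfl⟩

lemma sp_le_iff (G : Finset (Fin n)) (J : Ideal (MvPolynomial (Fin n) k)) : sp k G ≤ J ↔ ∀ i ∈ G, X i ∈ J := by
  rw [sp, Ideal.span_le, Set.image_subset_iff]
  rfl

lemma sp_le_sp (G G' : Finset (Fin n)) : sp k G ≤ sp k G' ↔ G ⊆ G' := by
  rw [sp_le_iff]
  simp only [X_mem_sp]
  rfl

lemma sp_inj {G G' : Finset (Fin n)} (h : sp k G = sp k G') : G = G' :=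
  Finset.Subset.antisymm ((sp_le_sp (k := k) _ _).1 h.le) ((sp_le_sp (k := k) _ _).1 h.ge)

lemma sp_prime (G : Finset (Fin n)) : (sp k G).IsPrime := by
  classical
  let φ : MvPolynomial (Fin n) k →ₐ[k] MvPolynomial (Fin n) k := aeval (fun i => if i ∈ G then 0 else X i)
  have h1 : ∀ p, p - φ p ∈ sp k G := by
    intro p
    induction p using MvPolynomial.induction_on with
    | C a => simp [φ]
    | add p q hp hq =>
      have : p + q - φ (p + q) = (p - φ p) + (q - φ q) := by rw [map_add]; ring
      rw [this]; exact Ideal.add_mem _ hp hq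
    | mul_X p i hp =>
      have : p * X i - φ (p * X i) = X i * (p - φ p) + φ p * (X i - φ (X i)) := by rw [map_mul]; ring
      rw [this]
      refine Ideal.add_mem _ (Ideal.mul_mem_left _ _ hp) (Ideal.mul_mem_left _ _ ?_)
      by_cases hi : i ∈ G
      · simp only [φ, aeval_X, if_pos hi, sub_zero]
        exact (X_mem_sp G i).2 hi
      · simp [φ, hi]
  have : sp k G = RingHom.ker φ := by
    apply le_antisymm
    · rw [sp_le_iff]
      intro i hi
      rw [RingHom.mem_ker]
      simp [φ, hi]
    · intro p hp
      rw [RingHom.mem_ker] at hp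
      have := h1 p
      rwa [hp, sub_zero] at this
  rw [this]
  exact RingHom.ker_isPrime φ

open Classical in
/-- variables in an ideal -/
noncomputable def vr (J : Ideal (MvPolynomial (Fin n) k)) : Finset (Fin n) :=
  Finset.univ.filter fun i => (X i : MvPolynomial (Fin n) k) ∈ J

lemma mem_vr (J : Ideal (MvPolynomial (Fin n) k)) (i : Fin n) : i ∈ vr J ↔ X i ∈ J := by simp [vr]

lemma vr_sp (G : Finset (Fin n)) : vr (sp k G) = G := by
  ext i; rw [mem_vr, X_mem_sp]

lemma sp_vr_le (J : Ideal (MvPolynomial (Fin n) k)) : sp k (vr J) ≤ J := by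
  rw [sp_le_iff]; exact fun i hi => (mem_vr J i).1 hi

variable (k S) in
/-- the monomial ideal -/
noncomputable def mI : Ideal (MvPolynomial (Fin n) k) := Ideal.span
      ((fun s : Finset (Fin n) => ∏ i ∈ s, MvPolynomial.X i) '' (S : Set (Finset (Fin n))))

lemma le_prime_iff (p : Ideal (MvPolynomial (Fin n) k)) [hp : p.IsPrime] : mI k S ≤ p ↔ cov S (vr p) := by
  rw [mI, Ideal.span_le, Set.image_subset_iff]
  constructor
  · intro h s hs hd
    have := h hs
    rw [Set.mem_preimage, SetLike.mem_coe, Ideal.IsPrime.prod_mem_iff] at this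
    obtain ⟨i, hi, hi2⟩ := this
    exact Finset.disjoint_left.1 hd hi ((mem_vr p i).2 hi2)
  · intro h s hs
    rw [Set.mem_preimage, SetLike.mem_coe, Ideal.IsPrime.prod_mem_iff]
    obtain ⟨i, hi, hi2⟩ := Finset.not_disjoint_iff.1 (h s hs)
    exact ⟨i, hi, (mem_vr p i).1 hi2⟩

lemma le_sp_iff (G : Finset (Fin n)) : mI k S ≤ sp k G ↔ cov S G := by
  haveI := sp_prime (k := k) G
  rw [le_prime_iff, vr_sp]

lemma vr_mono {J J' : Ideal (MvPolynomial (Fin n) k)} (h : J ≤ J') : vr J ⊆ vr J' := fun i hi =>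
  (mem_vr _ i).2 (h ((mem_vr _ i).1 hi))

lemma minimal_of_mem (p : Ideal (MvPolynomial (Fin n) k)) (hp : p ∈ (mI k S).minimalPrimes) :
    p = sp k (vr p) ∧ Minimal (cov S) (vr p) := by
  obtain ⟨⟨h1, h2⟩, h3⟩ := hp
  haveI := h1
  have hc := (le_prime_iff p).1 h2
  have e : p = sp k (vr p) :=
    le_antisymm (h3 ⟨sp_prime _, (le_sp_iff _).2 hc⟩ (sp_vr_le p)) (sp_vr_le p)
  refine ⟨e, hc, fun G hG hGp => ?_⟩
  have h4 := h3 ⟨sp_prime G, (le_sp_iff G).2 hG⟩ (((sp_le_sp _ _).2 hGp).trans (sp_vr_le p))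
  have := vr_mono h4
  rwa [vr_sp] at this

lemma mem_of_minimal (G : Finset (Fin n)) (h : Minimal (cov S) G) : sp k G ∈ (mI k S).minimalPrimes := by
  refine ⟨⟨sp_prime G, (le_sp_iff G).2 h.1⟩, ?_⟩
  rintro q ⟨hq1, hq2⟩ hq3
  haveI := hq1
  have hc := (le_prime_iff q).1 hq2
  have h1 : vr q ⊆ G := by
    have := vr_mono hq3
    rwa [vr_sp] at this
  exact ((sp_le_sp _ _).2 (h.2 hc h1)).trans (sp_vr_le q)

/-- union of minimal covers -/
def good (S : Finset (Finset (Fin n))) (G : Finset (Fin n)) : Prop :=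
  cov S G ∧ ∀ v ∈ G, ∃ C, C ⊆ G ∧ v ∈ C ∧ Minimal (cov S) C

lemma good_of_arr (J : Ideal (MvPolynomial (Fin n) k)) (h : arrMem k (mI k S) J) :
    J = sp k (vr J) ∧ good S (vr J) := by
  classical
  obtain ⟨_, T, hT, ⟨p0, hp0⟩, rfl⟩ := h
  have e : T.sup id = sp k (T.biUnion vr) := by
    apply le_antisymm
    · refine Finset.sup_le fun p hp => ?_
      rw [id, (minimal_of_mem p (hT hp)).1, sp_le_sp]
      exact Finset.subset_biUnion_of_mem vr hp
    · rw [sp_le_iff]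
      intro i hi
      obtain ⟨p, hp, hip⟩ := Finset.mem_biUnion.1 hi
      exact (Finset.le_sup (f := id) hp : p ≤ T.sup id) ((mem_vr p i).1 hip)
  have e2 : vr (T.sup id) = T.biUnion vr := by rw [e, vr_sp]
  rw [e2]
  refine ⟨e, cov_mono (Finset.subset_biUnion_of_mem vr hp0) (minimal_of_mem p0 (hT hp0)).2.1, ?_⟩
  intro v hv
  obtain ⟨p, hp, hip⟩ := Finset.mem_biUnion.1 hv
  exact ⟨vr p, Finset.subset_biUnion_of_mem vr hp, hip, (minimal_of_mem p (hT hp)).2⟩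

lemma arr_of_good (G : Finset (Fin n)) (h : good S G) : arrMem k (mI k S) (sp k G) := by
  classical
  refine ⟨(sp_prime G).ne_top, (Finset.univ.filter fun C => C ⊆ G ∧ Minimal (cov S) C).image (sp k), ?_, ?_, ?_⟩
  · intro p hp
    obtain ⟨C, hC, rfl⟩ := Finset.mem_image.1 (Finset.mem_coe.1 hp)
    exact mem_of_minimal C (Finset.mem_filter.1 hC).2.2
  · obtain ⟨C, hC, hC2⟩ := exists_minimal_le_of_wellFoundedLT (cov S) G h.1
    exact ⟨sp k C, Finset.mem_image_of_mem _ (Finset.mem_filter.2 ⟨Finset.mem_univ _, hC, hC2⟩)⟩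
  · apply le_antisymm
    · rw [sp_le_iff]
      intro v hv
      obtain ⟨C, hC, hvC, hC2⟩ := h.2 v hv
      have h1 : sp k C ≤ ((Finset.univ.filter fun C => C ⊆ G ∧ Minimal (cov S) C).image (sp k)).sup id :=
        Finset.le_sup (f := id) (Finset.mem_image_of_mem _ (Finset.mem_filter.2 ⟨Finset.mem_univ _, hC, hC2⟩))
      exact h1 ((X_mem_sp C v).2 hvC)
    · refine Finset.sup_le fun p hp => ?_
      obtain ⟨C, hC, rfl⟩ := Finset.mem_image.1 hp
      exact (sp_le_sp _ _).2 (Finset.mem_filter.1 hC).2.1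

lemma not_good_zero (F : Finset (Fin n)) (h : ¬ good S F) (r : ℕ) :
    Module.finrank k (HQ (MZ k S F r) (MB k S F r)) = 0 := by
  by_cases hF : cov S F
  · have : ∃ v ∈ F, ∀ C, C ⊆ F → v ∈ C → ¬ Minimal (cov S) C := by
      by_contra h2
      push Not at h2
      exact h ⟨hF, h2⟩
    obtain ⟨v, hv, hv2⟩ := this
    refine MZ_cone F r v hv fun G hGF hG => ?_
    obtain ⟨C, hC, hC2⟩ := exists_minimal_le_of_wellFoundedLT (cov S) G hG
    have : v ∉ C := fun hvC => hv2 C (hC.trans hGF) hvC hC2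
    refine cov_mono (fun j hj => Finset.mem_erase.2 ⟨fun h => this (h ▸ hj), hC hj⟩) hC2.1
  · exact MZ_notcov F r hF

theorem B2_arr (F : Finset (Fin n)) (hmem : arrMem k (mI k S) (sp k F)) (r : ℕ) (hr : r ≤ F.card) :
    Nonempty (simpHomology k k {q : arrP k (mI k S) //
                (⟨OrderDual.toDual (sp k F), hmem⟩ : arrP k (mI k S)) < q} (F.card - r) ≃ₗ[k]
      HQ (MZ k S F r) (MB k S F r)) := by
  classical
  let P := {q : arrP k (mI k S) // (⟨OrderDual.toDual (sp k F), hmem⟩ : arrP k (mI k S)) < q}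
  let st : P → Finset (Fin n) := fun q => vr (OrderDual.ofDual q.1.1)
  have hq : ∀ q : P, OrderDual.ofDual q.1.1 = sp k (st q) := fun q => (good_of_arr _ q.1.2).1
  have hg : ∀ q : P, good S (st q) := fun q => (good_of_arr _ q.1.2).2
  have hlt : ∀ q : P, sp k (st q) < sp k F := by
    intro q
    rw [← hq q]
    exact q.2
  have hF : ∀ q, st q ⊆ F := fun q => (sp_le_sp (k := k) _ _).1 (hlt q).le
  refine B2 F st ?_ ?_ hF ?_ (fun q => (hg q).1) ?_ r hr
  · have := (good_of_arr _ hmem).2.1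
    rwa [vr_sp] at this
  · intro q q'
    rw [← sp_le_sp (k := k), ← hq, ← hq]
    rfl
  · intro q h
    have := hlt q
    rw [h] at this
    exact lt_irrefl _ this
  · intro G hG hGF hne
    let U := Finset.univ.filter fun v => ∃ C, C ⊆ G ∧ v ∈ C ∧ Minimal (cov S) C
    have hU : ∀ v, v ∈ U ↔ ∃ C, C ⊆ G ∧ v ∈ C ∧ Minimal (cov S) C := by intro v; simp [U]
    have hCU : ∀ C, C ⊆ G → Minimal (cov S) C → C ⊆ U := fun C h1 h2 v hv => (hU v).2 ⟨C, h1, hv, h2⟩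
    have hUG : U ⊆ G := by
      intro v hv
      obtain ⟨C, h1, h2, _⟩ := (hU v).1 hv
      exact h1 h2
    have hgU : good S U := by
      obtain ⟨C, hC, hC2⟩ := exists_minimal_le_of_wellFoundedLT (cov S) G hG
      refine ⟨cov_mono (hCU C hC hC2) hC2.1, fun v hv => ?_⟩
      obtain ⟨C, h1, h2, h3⟩ := (hU v).1 hv
      exact ⟨C, hCU C h1 h3, h2, h3⟩
    have hlt : sp k U < sp k F := by
      refine lt_of_le_of_ne ((sp_le_sp _ _).2 (hUG.trans hGF)) fun h => hne ?_
      have := sp_inj h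
      exact Finset.Subset.antisymm hGF (this ▸ hUG)
    refine ⟨⟨⟨OrderDual.toDual (sp k U), arr_of_good U hgU⟩, hlt⟩, ?_, ?_⟩
    · change vr (sp k U) ⊆ G
      rw [vr_sp]; exact hUG
    · intro q hq2 v hv
      change v ∈ vr (sp k U)
      rw [vr_sp]
      obtain ⟨C, h1, h2, h3⟩ := (hg q).2 v hv
      exact (hU v).2 ⟨C, h1.trans hq2, h2, h3⟩

lemma ng_om (a : Fin n → ℤ) (ha : isOm a) : ng a = Finset.univ.filter fun i => a i = -1 := by
  ext i
  simp only [ng, Finset.mem_filter, Finset.mem_univ, true_and]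
  rcases ha i with h | h <;> simp [h]

lemma wt_om (a : Fin n → ℤ) (ha : isOm a) : wt a = (ng a).card := by rw [ng_om a ha]; rfl

lemma face_om (a : Fin n → ℤ) (ha : isOm a) : faceIdeal k a = sp k (ng a) := by
  rw [ng_om a ha, faceIdeal, sp]
  congr 2
  simp

end PartH

/-- For a squarefree monomial ideal `I ⊆ k[x₁,…,xₙ]` and `r ≥ 0`, the dimension of the
degree-`a` piece (`a ∈ {-1,0}ⁿ`) of the canonical `ℤⁿ`-grading of `H^r_I(R)` equals the
multiplicity `m_{r,a} = dim_k H̃_{|a|-r-1}(K(>p_a); k)` computed from the intersection poset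
(`m_{r,a} = 0` when `p_a ∉ P(X)` or `r > |a|`). -/
theorem stmt_11 (n : ℕ) (k : Type) [Field k]
    (I : Ideal (MvPolynomial (Fin n) k)) (S : Finset (Finset (Fin n)))
    (hI : I = Ideal.span
      ((fun s : Finset (Fin n) => ∏ i ∈ s, MvPolynomial.X i) '' (S : Set (Finset (Fin n)))))
    [∀ r : ℕ, Module k (LC k I r)]
    [∀ r : ℕ, IsScalarTower k (MvPolynomial (Fin n) k) (LC k I r)] :
    ∃ g : ∀ r : ℕ, (Fin n → ℤ) → Submodule k (LC k I r),
      (∀ r, DirectSum.IsInternal (g r) ∧ GradingCompat k _ (g r)) ∧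
      ∀ (r : ℕ) (a : Fin n → ℤ), isOm a →
        ((∀ hmem : arrMem k I (faceIdeal k a), r ≤ wt a →
          Module.finrank k (g r a) =
            Module.finrank k (simpHomology k k
              {q : arrP k I //
                (⟨OrderDual.toDual (faceIdeal k a), hmem⟩ : arrP k I) < q} (wt a - r))) ∧
        (arrMem k I (faceIdeal k a) → wt a < r → Module.finrank k (g r a) = 0) ∧
        (¬ arrMem k I (faceIdeal k a) → Module.finrank k (g r a) = 0)) := by
  choose g hg1 hg2 cl hcl1 hcl2 using fun r => lc_graded I hI r
  have key : ∀ r b, Module.finrank k (g r b) =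
      Module.finrank k (HQ (MZ k S (ng b) r) (MB k S (ng b) r)) := by
    intro r b
    obtain ⟨e⟩ := B1 (k := k) (S := S) (ng b) r
    rw [← e.finrank_eq, ← hcl1 r b]
    exact ((Submodule.quotEquivOfEq _ _ (hcl2 r b).symm).trans (cl r b).quotKerEquivRange).finrank_eq.symm
  refine ⟨g, fun r => ⟨hg1 r, hg2 r⟩, fun r a ha => ?_⟩
  rw [key r a, wt_om a ha]
  clear key hg1 hg2 hcl1 hcl2 cl g
  have hI' : I = mI k S := hI
  clear hI
  have hface := face_om (k := k) a ha
  generalize faceIdeal k a = fI at *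
  subst hface
  subst hI'
  refine ⟨fun hmem hr => ?_, fun _ hr => MZ_large _ _ hr, fun h => not_good_zero _ (fun hg => h (arr_of_good _ hg)) r⟩
  obtain ⟨e⟩ := B2_arr (ng a) hmem r hr
  exact e.finrank_eq.symm
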